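/- arXiv:1402.6974 — 7 statements merged into one kernel-verified Lean document; each statement's English description precedes it below -/
import Mathlib

section
/- Let Γ be a finite simplicial graph and let A_Γ be the associated right-angled Artin group with its standard generating set X = V(Γ). Then for every n ≥ 1 and every g ∈ A_Γ with g ≠ 1 and word length ‖g‖_X ≤ n, there exists a subgroup B ≤ A_Γ with g ∉ B and index [A_Γ : B] ≤ n + 1. In particular, the residual finiteness growth function satisfies F_{A_Γ,X}(n) ≤ n + 1. -/
/-!
A word `s₁ … sₙ` in the standard generators is read from right to left, greedily extracting a chain
of letters `c₀, c₁, …, c_{k-1}`: the first letter read is taken, and afterwards a letter is taken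
exactly when it does not commute with the last one taken, i.e. when its vertex is equal or
nonadjacent to the previous one (`chainOf`).

Put the points `0, 1, …, k` on a line and label the edge between `i` and `i + 1` by `cᵢ`. If equal
consecutive labels carry the same sign, every vertex `x` acts by a permutation which moves `i` to
`i + 1` or back along each `x`-labelled edge (according to the sign) and moves only endpoints of
`x`-labelled edges (`chainPerm`). Consecutive labels never commute, so adjacent vertices have
disjointly supported permutations, and `A_Γ` acts (`chainHom`).

For a word of minimal length, two consecutive chain letters are never mutually inverse, since all
letters between them commute with the earlier one and the two would cancel (`chainOf_spec`). When
such a word acts on `0`, letters of the chain advance the point along the line, and the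
others fix it (`chainHom_wordEval`): a skipped letter is adjacent to the last chain letter, whereas
the chain letter following that one is not. So the word moves `0` to `k ≠ 0`, and the stabilizer of
`0` is a subgroup of index at most `k + 1 ≤ n + 1` that avoids the given element.
-/


/-- The word length of `g` with respect to a generating set `S`: the least `n`
such that `g` is a product of `n` elements of `S ∪ S⁻¹`. -/
noncomputable def wordLength {G : Type*} [Group G] (S : Set G) (g : G) : ℕ :=
  sInf {n | ∃ l : List G, l.length = n ∧ (∀ x ∈ l, x ∈ S ∪ S⁻¹) ∧ l.prod = g}

/-- The index of a subgroup, valued in `ℕ∞`, with `⊤` for infinite index. -/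
noncomputable def eIndex {G : Type*} [Group G] (B : Subgroup G) : ℕ∞ :=
  if B.index = 0 then ⊤ else (B.index : ℕ∞)

/-- The divisibility function relative to a class `Ω` of subgroups:
the minimal index of a subgroup in `Ω` not containing `g`. -/
noncomputable def resD {G : Type*} [Group G] (Ω : Set (Subgroup G)) (g : G) : ℕ∞ :=
  ⨅ B ∈ {B | B ∈ Ω ∧ g ∉ B}, eIndex B

/-- The residual `Ω` growth function with respect to a generating set `S`. -/
noncomputable def resF {G : Type*} [Group G] (S : Set G) (Ω : Set (Subgroup G)) (n : ℕ) : ℕ∞ :=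
  ⨆ g ∈ {g : G | (∃ B ∈ Ω, g ∉ B) ∧ wordLength S g ≤ n}, resD Ω g

/-- The defining relators of the right-angled Artin group on a simplicial graph `Γ`:
commutators of adjacent vertices. -/
def raagRels {V : Type*} (Γ : SimpleGraph V) : Set (FreeGroup V) :=
  {r | ∃ x y : V, Γ.Adj x y ∧
    r = FreeGroup.of x * FreeGroup.of y * (FreeGroup.of x)⁻¹ * (FreeGroup.of y)⁻¹}

/-- The right-angled Artin group on a simplicial graph `Γ`. -/
abbrev RAAG {V : Type*} (Γ : SimpleGraph V) := PresentedGroup (raagRels Γ)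

/-- The standard generating set of the right-angled Artin group: the vertices of `Γ`. -/
def raagGens {V : Type*} (Γ : SimpleGraph V) : Set (RAAG Γ) :=
  Set.range (PresentedGroup.of (rels := raagRels Γ))

/-! ### Permutations attached to a labelled path -/

/-- Compatibility of the labels of two consecutive edges of a path: the vertices are equal or
nonadjacent, and if they are equal then so are the signs. A letter is a pair of a vertex and a sign,
`true` standing for the generator and `false` for its inverse. -/
def LetterCompat {V : Type*} (Γ : SimpleGraph V) (a b : V × Bool) : Prop :=
  ¬ Γ.Adj a.1 b.1 ∧ (a.1 = b.1 → a.2 = b.2)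

open Classical in
/-- The permutation by which the vertex `x` acts on the path labelled by a list of letters. The list
is read from its end: the letter `t` in `t :: ts` labels the edge from `ts.length` to
`ts.length + 1`. The points are all of `ℕ`; those beyond the length of the list are fixed. -/
noncomputable def chainPerm {V : Type*} : List (V × Bool) → V → Equiv.Perm ℕ
  | [], _ => 1
  | t :: ts, x =>
    if t.1 = x then
      if t.2 = true then chainPerm ts x * Equiv.swap ts.length (ts.length + 1)
      else Equiv.swap ts.length (ts.length + 1) * chainPerm ts x
    else chainPerm ts x

/-- A vertex fixes every point that is not an endpoint of an edge labelled by it. -/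
lemma chainPerm_fix {V : Type*} (C : List (V × Bool)) (x : V) (p : ℕ)
    (h : ∀ s ts, (s :: ts) <:+ C → s.1 = x → p ≠ ts.length ∧ p ≠ ts.length + 1) :
    chainPerm C x p = p := by
  induction C with
  | nil => simp [chainPerm]
  | cons t us ih =>
    have ih' := ih fun s ts hs hx => h s ts (hs.trans (List.suffix_cons t us)) hx
    unfold chainPerm
    split_ifs with h1 h2
    · obtain ⟨ha, hb⟩ := h t us List.suffix_rfl h1
      rw [Equiv.Perm.mul_apply, Equiv.swap_apply_of_ne_of_ne ha hb, ih']
    · obtain ⟨ha, hb⟩ := h t us List.suffix_rfl h1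
      rw [Equiv.Perm.mul_apply, ih', Equiv.swap_apply_of_ne_of_ne ha hb]
    · exact ih'

lemma chainPerm_fix_of_length_lt {V : Type*} (C : List (V × Bool)) (x : V) (p : ℕ)
    (h : C.length < p) : chainPerm C x p = p := by
  refine chainPerm_fix C x p fun s ts hs _ => ?_
  have := hs.length_le
  simp only [List.length_cons] at this
  omega

lemma chainPerm_pos {V : Type*} {Γ : SimpleGraph V} (C : List (V × Bool))
    (hC : C.IsChain (LetterCompat Γ)) (s : V × Bool) (ts : List (V × Bool))
    (hs : (s :: ts) <:+ C) (hpos : s.2 = true) :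
    chainPerm C s.1 ts.length = ts.length + 1 := by
  induction C with
  | nil => simp at hs
  | cons t us ih =>
    rcases List.suffix_cons_iff.1 hs with heq | hsu
    · obtain ⟨rfl, rfl⟩ := List.cons.inj heq
      simp only [chainPerm, if_true, hpos, Equiv.Perm.mul_apply, Equiv.swap_apply_left]
      exact chainPerm_fix_of_length_lt _ _ _ (Nat.lt_succ_self _)
    · have ih' := ih (List.isChain_cons.1 hC).2 hsu
      have hlen := hsu.length_le
      simp only [List.length_cons] at hlen
      unfold chainPerm
      split_ifs with h1 h2
      · rw [Equiv.Perm.mul_apply, Equiv.swap_apply_of_ne_of_ne (by omega) (by omega), ih']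
      · rw [Equiv.Perm.mul_apply, ih']
        refine Equiv.swap_apply_of_ne_of_ne (fun hm => ?_) (by omega)
        -- consecutive edges with the same vertex carry the same sign
        have hus : s :: ts = us := hsu.eq_of_length (by simpa using hm)
        subst hus
        have := ((List.isChain_cons_cons.1 hC).1).2 h1
        exact h2 (this.trans hpos)
      · exact ih'

lemma chainPerm_neg {V : Type*} {Γ : SimpleGraph V} (C : List (V × Bool))
    (hC : C.IsChain (LetterCompat Γ)) (s : V × Bool) (ts : List (V × Bool))
    (hs : (s :: ts) <:+ C) (hneg : s.2 = false) :
    chainPerm C s.1 (ts.length + 1) = ts.length := by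
  induction C with
  | nil => simp at hs
  | cons t us ih =>
    rcases List.suffix_cons_iff.1 hs with heq | hsu
    · obtain ⟨rfl, rfl⟩ := List.cons.inj heq
      simp only [chainPerm, if_true, hneg, Bool.false_eq_true, if_false, Equiv.Perm.mul_apply]
      rw [chainPerm_fix_of_length_lt _ _ _ (Nat.lt_succ_self _), Equiv.swap_apply_right]
    · have ih' := ih (List.isChain_cons.1 hC).2 hsu
      have hlen := hsu.length_le
      simp only [List.length_cons] at hlen
      unfold chainPerm
      split_ifs with h1 h2
      · rw [Equiv.Perm.mul_apply, Equiv.swap_apply_of_ne_of_ne (fun hm => ?_) (by omega), ih']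
        have hus : s :: ts = us := hsu.eq_of_length (by simpa using hm)
        subst hus
        have := ((List.isChain_cons_cons.1 hC).1).2 h1
        rw [h2, hneg] at this
        exact Bool.noConfusion this
      · rw [Equiv.Perm.mul_apply, ih', Equiv.swap_apply_of_ne_of_ne (by omega) (by omega)]
      · exact ih'

lemma suffix_eq_of_length {α : Type*} {a b c : List α} (ha : a <:+ c) (hb : b <:+ c)
    (h : a.length = b.length) : a = b :=
  (List.suffix_of_suffix_length_le ha hb h.le).eq_of_length h

/-- Two edges of a compatible path that share an endpoint have nonadjacent vertices. -/
lemma not_adj_of_consecutive {V : Type*} {Γ : SimpleGraph V} {C : List (V × Bool)}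
    (hC : C.IsChain (LetterCompat Γ)) {s s' : V × Bool} {ts ts' : List (V × Bool)}
    (hs : (s :: ts) <:+ C) (hs' : (s' :: ts') <:+ C) (h : ts.length = ts'.length + 1) :
    ¬ Γ.Adj s.1 s'.1 := by
  have heq : ts = s' :: ts' :=
    suffix_eq_of_length ((List.suffix_cons s ts).trans hs) hs' (by simpa using h)
  subst heq
  exact (List.isChain_cons_cons.1 (hC.suffix hs)).1.1

lemma chainPerm_commute {V : Type*} {Γ : SimpleGraph V} (C : List (V × Bool))
    (hC : C.IsChain (LetterCompat Γ)) (x y : V) (hxy : Γ.Adj x y) :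
    Commute (chainPerm C x) (chainPerm C y) := by
  refine Equiv.Perm.Disjoint.commute fun p => ?_
  by_contra! hp
  obtain ⟨hx, hy⟩ := hp
  have hx' := mt (chainPerm_fix C x p) hx
  have hyfix := mt (chainPerm_fix C y p) hy
  push Not at hx' hyfix
  obtain ⟨s, ts, hs, rfl, h1⟩ := hx'
  obtain ⟨s', ts', hs', rfl, h2⟩ := hyfix
  -- the two edges have the common endpoint `p`
  have hcases : ts.length = ts'.length ∨ ts.length = ts'.length + 1 ∨
      ts'.length = ts.length + 1 := by
    by_cases ha : p = ts.length <;> by_cases hb : p = ts'.length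
    · omega
    · have := h2 hb
      omega
    · have := h1 ha
      omega
    · have := h1 ha
      have := h2 hb
      omega
  rcases hcases with h | h | h
  · have := suffix_eq_of_length hs hs' (by simpa using h)
    obtain ⟨rfl, -⟩ := List.cons.inj this
    exact Γ.irrefl hxy
  · exact not_adj_of_consecutive hC hs hs' h hxy
  · exact not_adj_of_consecutive hC hs' hs h hxy.symm

/-- The action of the right-angled Artin group on a compatible labelled path. -/
noncomputable def chainHom {V : Type*} (Γ : SimpleGraph V) (C : List (V × Bool))
    (hC : C.IsChain (LetterCompat Γ)) : RAAG Γ →* Equiv.Perm ℕ :=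
  PresentedGroup.toGroup (f := chainPerm C) (by
    rintro r ⟨x, y, hxy, rfl⟩
    have := (chainPerm_commute C hC x y hxy).eq
    simp only [map_mul, map_inv, FreeGroup.lift_apply_of]
    rw [this]
    group)

lemma chainHom_of {V : Type*} (Γ : SimpleGraph V) (C : List (V × Bool))
    (hC : C.IsChain (LetterCompat Γ)) (x : V) :
    chainHom Γ C hC (PresentedGroup.of x) = chainPerm C x :=
  PresentedGroup.toGroup.of _

lemma chainHom_fix_of_length_lt {V : Type*} (Γ : SimpleGraph V) (C : List (V × Bool))
    (hC : C.IsChain (LetterCompat Γ)) (p : ℕ) (hp : C.length < p) (g : RAAG Γ) :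
    chainHom Γ C hC g p = p := by
  have h := PresentedGroup.generated_by (raagRels Γ)
    ((MulAction.stabilizer (Equiv.Perm ℕ) p).comap (chainHom Γ C hC))
    (fun x => by
      rw [Subgroup.mem_comap, MulAction.mem_stabilizer_iff, chainHom_of]
      exact chainPerm_fix_of_length_lt C x p hp) g
  exact h

/-- An element moving the point `0` of a path of length `k` avoids a subgroup of index at most
`k + 1`, namely the stabilizer of `0`. -/
lemma exists_subgroup_of_moves {V : Type*} (Γ : SimpleGraph V) (C : List (V × Bool))
    (hC : C.IsChain (LetterCompat Γ)) (g : RAAG Γ) (hg : chainHom Γ C hC g 0 ≠ 0) :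
    ∃ B : Subgroup (RAAG Γ), g ∉ B ∧ B.index ≠ 0 ∧ B.index ≤ C.length + 1 := by
  let _ : MulAction (RAAG Γ) ℕ := MulAction.compHom ℕ (chainHom Γ C hC)
  have hsmul : ∀ (a : RAAG Γ) (p : ℕ), a • p = chainHom Γ C hC a p := fun _ _ => rfl
  have horb : MulAction.orbit (RAAG Γ) (0 : ℕ) ⊆ (Finset.range (C.length + 1) : Set ℕ) := by
    rintro _ ⟨a, rfl⟩
    simp only [hsmul, Finset.coe_range, Set.mem_Iio]
    by_contra hlt
    have hfix := chainHom_fix_of_length_lt Γ C hC (chainHom Γ C hC a 0) (by omega) a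
    have := (chainHom Γ C hC a).injective hfix
    omega
  refine ⟨MulAction.stabilizer (RAAG Γ) (0 : ℕ), hg, ?_, ?_⟩
  · rw [MulAction.index_stabilizer]
    exact Set.ncard_ne_zero_of_mem (MulAction.mem_orbit_self _)
      ((Finset.finite_toSet _).subset horb)
  · rw [MulAction.index_stabilizer]
    simpa using Set.ncard_le_ncard horb (Finset.finite_toSet _)

/-! ### Words and their greedy chains -/

/-- The element of the right-angled Artin group represented by a letter. -/
def letterVal {V : Type*} (Γ : SimpleGraph V) (s : V × Bool) : RAAG Γ :=
  if s.2 = true then PresentedGroup.of s.1 else (PresentedGroup.of s.1)⁻¹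

/-- The element of the right-angled Artin group represented by a word. -/
def wordEval {V : Type*} (Γ : SimpleGraph V) (l : List (V × Bool)) : RAAG Γ :=
  (l.map (letterVal Γ)).prod

/-- A word is reduced if it is a shortest one representing its value. -/
def IsReducedWord {V : Type*} (Γ : SimpleGraph V) (l : List (V × Bool)) : Prop :=
  ∀ l', wordEval Γ l' = wordEval Γ l → l.length ≤ l'.length

open Classical in
/-- The greedy chain of a word, read from right to left: a letter is put in front of the chain
unless its vertex is adjacent to that of the current front letter. -/
noncomputable def chainOf {V : Type*} (Γ : SimpleGraph V) : List (V × Bool) → List (V × Bool)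
  | [] => []
  | s :: l =>
    match chainOf Γ l with
    | [] => [s]
    | t :: ts => if Γ.Adj s.1 t.1 then t :: ts else s :: t :: ts

lemma chainOf_length_le {V : Type*} (Γ : SimpleGraph V) (l : List (V × Bool)) :
    (chainOf Γ l).length ≤ l.length := by
  induction l with
  | nil => simp [chainOf]
  | cons s l ih =>
    unfold chainOf
    split
    · simp
    · rename_i t ts heq
      rw [heq] at ih
      split_ifs <;> simp only [List.length_cons] at ih ⊢ <;> omega

lemma chainOf_cons_ne_nil {V : Type*} (Γ : SimpleGraph V) (s : V × Bool) (l : List (V × Bool)) :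
    chainOf Γ (s :: l) ≠ [] := by
  unfold chainOf
  split
  · simp
  · split_ifs <;> simp

lemma wordEval_cons {V : Type*} (Γ : SimpleGraph V) (s : V × Bool) (l : List (V × Bool)) :
    wordEval Γ (s :: l) = letterVal Γ s * wordEval Γ l := by
  simp [wordEval]

lemma wordEval_append {V : Type*} (Γ : SimpleGraph V) (l l' : List (V × Bool)) :
    wordEval Γ (l ++ l') = wordEval Γ l * wordEval Γ l' := by
  simp [wordEval]

lemma IsReducedWord.tail {V : Type*} {Γ : SimpleGraph V} {s : V × Bool} {l : List (V × Bool)}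
    (h : IsReducedWord Γ (s :: l)) : IsReducedWord Γ l := by
  intro l' hl'
  have := h (s :: l') (by rw [wordEval_cons, wordEval_cons, hl'])
  simpa using this

lemma commute_of_adj {V : Type*} {Γ : SimpleGraph V} {x y : V} (h : Γ.Adj x y) :
    Commute (PresentedGroup.of x : RAAG Γ) (PresentedGroup.of y) := by
  have h1 : PresentedGroup.mk (raagRels Γ)
      (FreeGroup.of x * FreeGroup.of y * (FreeGroup.of x)⁻¹ * (FreeGroup.of y)⁻¹) = 1 :=
    PresentedGroup.one_of_mem ⟨x, y, h, rfl⟩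
  simp only [map_mul, map_inv] at h1
  exact mul_inv_eq_iff_eq_mul.1 (mul_inv_eq_one.1 h1)

lemma letterVal_commute {V : Type*} {Γ : SimpleGraph V} {s t : V × Bool} (h : Γ.Adj s.1 t.1) :
    Commute (letterVal Γ s) (letterVal Γ t) := by
  have := commute_of_adj h
  unfold letterVal
  split_ifs
  · exact this
  · exact this.inv_right
  · exact this.inv_left
  · exact this.inv_inv

/-- In a reduced word, letters adjacent to `t` cannot separate `t` from its inverse. -/
lemma IsReducedWord.sign_eq {V : Type*} {Γ : SimpleGraph V} {s t : V × Bool}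
    {pre post : List (V × Bool)} (h : IsReducedWord Γ (s :: (pre ++ t :: post)))
    (hpre : ∀ u ∈ pre, Γ.Adj u.1 t.1) (hst : s.1 = t.1) : s.2 = t.2 := by
  by_contra hne
  have hcomm : Commute (wordEval Γ pre) (letterVal Γ t) := by
    refine Commute.list_prod_left _ _ fun a ha => ?_
    obtain ⟨u, hu, rfl⟩ := List.mem_map.1 ha
    exact letterVal_commute (hpre u hu)
  have hinv : letterVal Γ s * letterVal Γ t = 1 := by
    obtain ⟨x, b⟩ := s
    obtain ⟨y, c⟩ := t
    obtain rfl : x = y := hst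
    cases b <;> cases c <;> simp_all [letterVal]
  have := h (pre ++ post) (by
    rw [wordEval_cons, wordEval_append, wordEval_append, wordEval_cons, ← mul_assoc (wordEval Γ pre),
      hcomm.eq, mul_assoc (letterVal Γ t), ← mul_assoc (letterVal Γ s), hinv, one_mul])
  simp only [List.length_cons, List.length_append] at this
  omega

/-- The greedy chain of a reduced word is compatible; moreover the letters read after the last
chain letter are all adjacent to it. -/
lemma chainOf_spec {V : Type*} {Γ : SimpleGraph V} (l : List (V × Bool))
    (hl : IsReducedWord Γ l) :
    (chainOf Γ l).IsChain (LetterCompat Γ) ∧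
      ∀ t ts, chainOf Γ l = t :: ts →
        ∃ pre post, l = pre ++ t :: post ∧ ∀ u ∈ pre, Γ.Adj u.1 t.1 := by
  induction l with
  | nil => simp [chainOf]
  | cons s l ih =>
    obtain ⟨ih1, ih2⟩ := ih hl.tail
    unfold chainOf
    split
    · refine ⟨List.isChain_singleton _, fun t ts h => ?_⟩
      obtain ⟨rfl, -⟩ := List.cons.inj h
      exact ⟨[], l, rfl, by simp⟩
    · rename_i t ts heq
      obtain ⟨pre, post, rfl, hpre⟩ := ih2 t ts heq
      rw [heq] at ih1
      split_ifs with hadj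
      · refine ⟨ih1, fun t' ts' h => ?_⟩
        obtain ⟨rfl, -⟩ := List.cons.inj h
        refine ⟨s :: pre, post, rfl, fun u hu => ?_⟩
        rcases List.mem_cons.1 hu with rfl | hu
        · exact hadj
        · exact hpre u hu
      · refine ⟨List.isChain_cons_cons.2 ⟨⟨hadj, hl.sign_eq hpre⟩, ih1⟩, fun t' ts' h => ?_⟩
        obtain ⟨rfl, -⟩ := List.cons.inj h
        exact ⟨[], _, rfl, by simp⟩

/-- A letter labelling an edge of the path moves the start of that edge to its end. -/
lemma chainHom_letter_step {V : Type*} (Γ : SimpleGraph V) (C : List (V × Bool))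
    (hC : C.IsChain (LetterCompat Γ)) (s : V × Bool) (ts : List (V × Bool))
    (hs : (s :: ts) <:+ C) :
    chainHom Γ C hC (letterVal Γ s) ts.length = ts.length + 1 := by
  unfold letterVal
  split_ifs with h
  · rw [chainHom_of]
    exact chainPerm_pos C hC s ts hs h
  · rw [map_inv, chainHom_of, Equiv.Perm.inv_eq_iff_eq]
    exact (chainPerm_neg C hC s ts hs (by simpa using h)).symm

/-- A letter adjacent to the label of an edge fixes the end of that edge. -/
lemma chainHom_letter_fix {V : Type*} (Γ : SimpleGraph V) (C : List (V × Bool))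
    (hC : C.IsChain (LetterCompat Γ)) (s t : V × Bool) (ts : List (V × Bool))
    (ht : (t :: ts) <:+ C) (hadj : Γ.Adj s.1 t.1) :
    chainHom Γ C hC (letterVal Γ s) (t :: ts).length = (t :: ts).length := by
  have hfix : chainPerm C s.1 (t :: ts).length = (t :: ts).length := by
    refine chainPerm_fix C s.1 _ fun u us hu hus => ⟨fun h => ?_, fun h => ?_⟩
    · -- the edge starting at this point has a vertex not adjacent to `t`
      exact not_adj_of_consecutive hC hu ht (by simpa using h.symm) (hus ▸ hadj)
    · have := suffix_eq_of_length hu ht (by simpa using h.symm)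
      obtain ⟨rfl, -⟩ := List.cons.inj this
      exact Γ.irrefl (hus ▸ hadj)
  unfold letterVal
  split_ifs with h
  · rw [chainHom_of, hfix]
  · rw [map_inv, chainHom_of, Equiv.Perm.inv_eq_iff_eq, hfix]

/-- A word whose greedy chain labels an initial part of the path moves `0` to the end of that
part. -/
lemma chainHom_wordEval {V : Type*} (Γ : SimpleGraph V) (C : List (V × Bool))
    (hC : C.IsChain (LetterCompat Γ)) (l : List (V × Bool)) (hl : chainOf Γ l <:+ C) :
    chainHom Γ C hC (wordEval Γ l) 0 = (chainOf Γ l).length := by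
  induction l with
  | nil => simp [wordEval, chainOf]
  | cons s l ih =>
    rw [wordEval_cons, map_mul, Equiv.Perm.mul_apply]
    unfold chainOf at hl ⊢
    split at hl
    · rename_i heq
      rw [heq] at ih
      rw [ih List.nil_suffix]
      exact chainHom_letter_step Γ C hC s [] hl
    · rename_i t ts heq
      rw [heq] at ih
      split_ifs at hl ⊢ with hadj
      · rw [ih hl]
        exact chainHom_letter_fix Γ C hC s t ts hl hadj
      · rw [ih ((List.suffix_cons _ _).trans hl)]
        exact chainHom_letter_step Γ C hC s (t :: ts) hl

/-! ### Word length and the bound -/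

/-- The infimum defining the word length is attained, as the vertices generate the group. -/
lemma exists_word_of_wordLength_le {V : Type*} (Γ : SimpleGraph V) (g : RAAG Γ) (n : ℕ)
    (hg : wordLength (raagGens Γ) g ≤ n) :
    ∃ l : List (V × Bool), wordEval Γ l = g ∧ l.length ≤ n := by
  have hne : {n | ∃ l : List (RAAG Γ), l.length = n ∧
      (∀ x ∈ l, x ∈ raagGens Γ ∪ (raagGens Γ)⁻¹) ∧ l.prod = g}.Nonempty := by
    have hmem : g ∈ Subgroup.closure (raagGens Γ) := by
      rw [raagGens, PresentedGroup.closure_range_of]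
      exact Subgroup.mem_top g
    rw [← Subgroup.mem_toSubmonoid, Subgroup.closure_toSubmonoid] at hmem
    obtain ⟨l, h1, h2⟩ := Submonoid.exists_list_of_mem_closure hmem
    exact ⟨l.length, l, rfl, h1, h2⟩
  obtain ⟨l, hlen, hl, rfl⟩ := Nat.sInf_mem hne
  have hword : ∀ l : List (RAAG Γ), (∀ x ∈ l, x ∈ raagGens Γ ∪ (raagGens Γ)⁻¹) →
      ∃ w : List (V × Bool), wordEval Γ w = l.prod ∧ w.length = l.length := by
    intro l hl
    induction l with
    | nil => exact ⟨[], by simp [wordEval], rfl⟩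
    | cons a l ih =>
      obtain ⟨w, hw, hwl⟩ := ih fun x hx => hl x (List.mem_cons_of_mem _ hx)
      rcases hl a List.mem_cons_self with ⟨x, hx⟩ | ⟨x, hx⟩
      · exact ⟨(x, true) :: w, by simp [wordEval_cons, hw, letterVal, hx], by simp [hwl]⟩
      · exact ⟨(x, false) :: w, by simp [wordEval_cons, hw, letterVal, hx], by simp [hwl]⟩
  obtain ⟨w, hw, hwl⟩ := hword l hl
  exact ⟨w, hw, by rw [hwl, hlen]; exact hg⟩

lemma exists_reduced_word {V : Type*} (Γ : SimpleGraph V) (l : List (V × Bool)) :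
    ∃ w, wordEval Γ w = wordEval Γ l ∧ w.length ≤ l.length ∧ IsReducedWord Γ w := by
  obtain ⟨w, hw, hmin⟩ := exists_minimalFor_of_wellFoundedLT
    (fun w => wordEval Γ w = wordEval Γ l) List.length ⟨l, rfl⟩
  have hle : ∀ w', wordEval Γ w' = wordEval Γ l → w.length ≤ w'.length := fun w' hw' =>
    (le_total w.length w'.length).elim id (hmin hw')
  exact ⟨w, hw, hle l rfl, fun w' hw' => hle w' (hw'.trans hw)⟩

lemma exists_subgroup_index_le {V : Type*} (Γ : SimpleGraph V) (n : ℕ) (g : RAAG Γ) (hg : g ≠ 1)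
    (hn : wordLength (raagGens Γ) g ≤ n) :
    ∃ B : Subgroup (RAAG Γ), g ∉ B ∧ B.index ≠ 0 ∧ B.index ≤ n + 1 := by
  obtain ⟨l, rfl, hln⟩ := exists_word_of_wordLength_le Γ g n hn
  obtain ⟨w, hw, hwl, hred⟩ := exists_reduced_word Γ l
  rw [← hw] at hg ⊢
  have hC := (chainOf_spec w hred).1
  have hmove : chainHom Γ (chainOf Γ w) hC (wordEval Γ w) 0 ≠ 0 := by
    rw [chainHom_wordEval Γ _ hC w List.suffix_rfl]
    cases w with
    | nil => exact absurd (by simp [wordEval]) hg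
    | cons s w => simpa using chainOf_cons_ne_nil Γ s w
  obtain ⟨B, h1, h2, h3⟩ := exists_subgroup_of_moves Γ _ hC _ hmove
  have := chainOf_length_le Γ w
  exact ⟨B, h1, h2, by omega⟩

/-- **Theorem 1.1** (residual finiteness growth of RAAGs): for a finite simplicial graph `Γ`,
every nontrivial `g ∈ A_Γ` of word length at most `n` (with `n ≥ 1`) lies outside a subgroup
of index at most `n + 1`; consequently `F_{A_Γ, X}(n) ≤ n + 1`. -/
theorem raag_residual_finiteness_growth_le_linear
    {V : Type*} [Fintype V] (Γ : SimpleGraph V) :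
    (∀ n : ℕ, 1 ≤ n → ∀ g : RAAG Γ, g ≠ 1 → wordLength (raagGens Γ) g ≤ n →
      ∃ B : Subgroup (RAAG Γ), g ∉ B ∧ B.index ≠ 0 ∧ B.index ≤ n + 1) ∧
    (∀ n : ℕ, 1 ≤ n →
      resF (raagGens Γ) (Set.univ : Set (Subgroup (RAAG Γ))) n ≤ ((n : ℕ∞) + 1)) := by
  have main := exists_subgroup_index_le Γ
  refine ⟨fun n _ g hg hn => main n g hg hn, fun n _ => ?_⟩
  refine iSup₂_le fun g hg => ?_
  obtain ⟨⟨B₀, -, hB₀⟩, hn⟩ := hg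
  have hg1 : g ≠ 1 := fun h => hB₀ (h ▸ B₀.one_mem)
  obtain ⟨B, hB, h0, hle⟩ := main n g hg1 hn
  refine iInf₂_le_of_le B ⟨Set.mem_univ B, hB⟩ ?_
  rw [eIndex, if_neg h0]
  exact_mod_cast hle
end

section
/- Consequently, every right-angled Artin group A_Γ on a finite simplicial graph Γ is residually finite: for every g ∈ A_Γ with g ≠ 1 there exists a finite-index subgroup B ≤ A_Γ with g ∉ B. -/
namespace RAAGResidual

open Classical

variable {V : Type*} (Γ : SimpleGraph V)

/-! ### Syllable lists and minimality -/

/-- The element of the right-angled Artin group spelled by a list of syllables: the pair `(v, n)`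
stands for `v ^ n`. -/
noncomputable def eval (L : List (V × ℤ)) : RAAG Γ :=
  (L.map fun p => (PresentedGroup.of p.1 : RAAG Γ) ^ p.2).prod

lemma eval_cons (p : V × ℤ) (L : List (V × ℤ)) :
    eval Γ (p :: L) = (PresentedGroup.of p.1 : RAAG Γ) ^ p.2 * eval Γ L := by
  simp [eval]

lemma eval_append (L M : List (V × ℤ)) : eval Γ (L ++ M) = eval Γ L * eval Γ M := by
  simp [eval]

lemma exists_eval (g : RAAG Γ) : ∃ L, eval Γ L = g := by
  obtain ⟨w, rfl⟩ := PresentedGroup.mk_surjective _ g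
  induction w using FreeGroup.induction_on with
  | C1 => exact ⟨[], by simp [eval]⟩
  | of v => exact ⟨[(v, 1)], by simp [eval, PresentedGroup.of]⟩
  | inv_of v _ => exact ⟨[(v, -1)], by simp [eval, PresentedGroup.of]⟩
  | mul x y hx hy =>
    obtain ⟨L, hL⟩ := hx
    obtain ⟨M, hM⟩ := hy
    exact ⟨L ++ M, by rw [eval_append, hL, hM, map_mul]⟩

lemma of_commute {u v : V} (h : Γ.Adj u v) :
    Commute (PresentedGroup.of u : RAAG Γ) (PresentedGroup.of v) := by
  have h1 : PresentedGroup.mk (raagRels Γ) (FreeGroup.of u * FreeGroup.of v *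
      (FreeGroup.of u)⁻¹ * (FreeGroup.of v)⁻¹) = 1 :=
    PresentedGroup.one_of_mem ⟨u, v, h, rfl⟩
  simp only [map_mul, map_inv] at h1
  exact commutatorElement_eq_one_iff_commute.1 h1

/-- A list of syllables of minimal length among those spelling the same element. -/
def Minimal (L : List (V × ℤ)) : Prop :=
  ∀ M, eval Γ M = eval Γ L → L.length ≤ M.length

variable {Γ}

lemma Minimal.ne_zero {L : List (V × ℤ)} (hL : Minimal Γ L) : ∀ p ∈ L, p.2 ≠ 0 := by
  intro p hp h0
  obtain ⟨A, B, rfl⟩ := List.append_of_mem hp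
  have := hL (A ++ B) (by simp [eval_append, eval_cons, h0])
  simp at this

/-- Two syllables with the same letter in a minimal list are separated by a syllable whose letter is
not adjacent to it; otherwise the two could be merged. -/
lemma Minimal.exists_between {L : List (V × ℤ)} (hL : Minimal Γ L) {i j : Fin L.length}
    (hij : i < j) (h : L[i].1 = L[j].1) :
    ∃ l : Fin L.length, i < l ∧ l < j ∧ ¬ Γ.Adj L[l].1 L[i].1 := by
  by_contra! hcon
  have hij' : (i : ℕ) < j := hij
  have e1 : L = L.take j ++ L[j] :: L.drop (j + 1) := by
    simp
  have hi : (i : ℕ) < (L.take j).length := by simp; omega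
  have e2 : L.take j = (L.take j).take i ++ L[i] :: (L.take j).drop (i + 1) := by
    have h3 : L[i] = (L.take j)[(i : ℕ)] := by simp
    rw [h3, List.cons_getElem_drop_succ, List.take_append_drop]
  set B := (L.take j).drop (i + 1) with hB
  have hBc : Commute ((PresentedGroup.of L[i].1 : RAAG Γ) ^ L[j].2) (eval Γ B) := by
    apply Commute.list_prod_right
    intro x hx
    obtain ⟨p, hp, rfl⟩ := List.mem_map.1 hx
    obtain ⟨l, hl, rfl⟩ := List.mem_iff_getElem.1 hp
    have hl' : i + 1 + l < j := by
      simp [hB] at hl; omega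
    have := hcon ⟨i + 1 + l, by omega⟩ (Fin.lt_def.2 (by simp; omega)) (Fin.lt_def.2 hl')
    simp only [hB, List.getElem_drop, List.getElem_take]
    exact ((of_commute Γ this).symm.zpow_zpow _ _)
  have key : eval Γ ((L.take j).take i ++ (L[i].1, L[i].2 + L[j].2) :: (B ++ L.drop (j + 1)))
      = eval Γ L := by
    conv_rhs => rw [e1, e2]
    simp only [eval_append, eval_cons, ← h, zpow_add, mul_assoc]
    rw [← mul_assoc (eval Γ B), ← hBc.eq, mul_assoc]
  have hlen := hL _ key
  have l1 := congrArg List.length e1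
  have l2 := congrArg List.length e2
  simp only [List.length_append, List.length_cons] at hlen l1 l2
  omega

/-! ### Partial maps on sets of positions -/

variable (Γ)

/-- The position `i` of `L` carries the letter `v` and can be added to the set of positions `I`.
If `I` is an ideal of the heap of `L`, this says that `I ∪ {i}` is again an ideal. -/
def Addable (L : List (V × ℤ)) (v : V) (I : Finset (Fin L.length)) (i : Fin L.length) : Prop :=
  L[i].1 = v ∧ i ∉ I ∧ (∀ j < i, ¬ Γ.Adj L[j].1 v → j ∈ I) ∧ (∀ j > i, ¬ Γ.Adj L[j].1 v → j ∉ I)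

/-- The partial map on sets of positions adding the position with letter `v` that can be added. -/
noncomputable def step (L : List (V × ℤ)) (v : V) (I : Finset (Fin L.length)) :
    Option (Finset (Fin L.length)) :=
  if h : ∃ i, Addable Γ L v I i then some (insert h.choose I) else none

variable {Γ} {L : List (V × ℤ)}

/-- Positions with the same letter are dependent, so the earlier of two addable ones would already
have to be in `I`. -/
lemma Addable.unique {v : V} {I : Finset (Fin L.length)} {i j : Fin L.length}
    (hi : Addable Γ L v I i) (hj : Addable Γ L v I j) : i = j := by
  rcases lt_trichotomy i j with h | h | h
  · exact absurd (hj.2.2.1 i h (by rw [hi.1]; exact Γ.irrefl)) hi.2.1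
  · exact h
  · exact absurd (hi.2.2.1 j h (by rw [hj.1]; exact Γ.irrefl)) hj.2.1

lemma step_eq_some {v : V} {I J : Finset (Fin L.length)} :
    step Γ L v I = some J ↔ ∃ i, Addable Γ L v I i ∧ insert i I = J := by
  unfold step
  split_ifs with h
  · rw [Option.some_inj]
    constructor
    · exact fun e => ⟨_, h.choose_spec, e⟩
    · rintro ⟨i, hi, rfl⟩
      rw [hi.unique h.choose_spec]
  · simp only [false_iff]
    rintro ⟨i, hi, -⟩
    exact h ⟨i, hi⟩

lemma Addable.swap {u v : V} (huv : Γ.Adj u v) {I : Finset (Fin L.length)} {i j : Fin L.length}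
    (hi : Addable Γ L u I i) (hj : Addable Γ L v (insert i I) j) :
    Addable Γ L v I j ∧ Addable Γ L u (insert j I) i := by
  obtain ⟨a1, a2, a3, a4⟩ := hi
  obtain ⟨b1, b2, b3, b4⟩ := hj
  simp only [Finset.mem_insert, not_or] at b2 b3 b4
  refine ⟨⟨b1, b2.2, fun l hl hn => ?_, fun l hl hn => (b4 l hl hn).2⟩, a1, ?_,
    fun l hl hn => ?_, fun l hl hn => ?_⟩
  · rcases b3 l hl hn with rfl | h
    · exact absurd (a1 ▸ huv) hn
    · exact h
  · simp [Ne.symm b2.1, a2]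
  · exact Finset.mem_insert_of_mem (a3 l hl hn)
  · simp only [Finset.mem_insert, not_or]
    refine ⟨?_, a4 l hl hn⟩
    rintro rfl
    exact hn (b1 ▸ huv.symm)

lemma stepPair_le {u v : V} (huv : Γ.Adj u v) (I K : Finset (Fin L.length))
    (h : (step Γ L u I).bind (step Γ L v) = some K) :
    (step Γ L v I).bind (step Γ L u) = some K := by
  obtain ⟨J, hJ, hK⟩ := Option.bind_eq_some_iff.1 h
  obtain ⟨i, hi, rfl⟩ := step_eq_some.1 hJ
  obtain ⟨j, hj, rfl⟩ := step_eq_some.1 hK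
  obtain ⟨h1, h2⟩ := hi.swap huv hj
  exact Option.bind_eq_some_iff.2 ⟨_, step_eq_some.2 ⟨j, h1, rfl⟩,
    step_eq_some.2 ⟨i, h2, Finset.insert_comm _ _ _⟩⟩

lemma stepPair_comm {u v : V} (huv : Γ.Adj u v) (I : Finset (Fin L.length)) :
    (step Γ L u I).bind (step Γ L v) = (step Γ L v I).bind (step Γ L u) :=
  Option.ext fun K => ⟨stepPair_le huv I K, stepPair_le huv.symm I K⟩

lemma stepPair_self (hL : Minimal Γ L) (v : V) (I : Finset (Fin L.length)) :
    (step Γ L v I).bind (step Γ L v) = none := by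
  rw [Option.eq_none_iff_forall_ne_some]
  intro K h
  obtain ⟨J, hJ, hK⟩ := Option.bind_eq_some_iff.1 h
  obtain ⟨i, ⟨a1, a2, a3, a4⟩, rfl⟩ := step_eq_some.1 hJ
  obtain ⟨j, ⟨b1, b2, b3, b4⟩, rfl⟩ := step_eq_some.1 hK
  simp only [Finset.mem_insert, not_or] at b2 b3
  rcases lt_trichotomy i j with h | h | h
  · obtain ⟨l, h1, h2, h3⟩ := hL.exists_between h (a1.trans b1.symm)
    rw [a1] at h3
    rcases b3 l h2 h3 with rfl | h4
    · exact lt_irrefl _ h1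
    · exact a4 l h1 h3 h4
  · exact b2.1 h.symm
  · exact b2.2 (a3 j h (by rw [b1]; exact Γ.irrefl))

/-! ### Pullback operators and unipotent units -/

section Operators

variable {S R : Type*} [CommRing R]

/-- Pullback of functions along a partial map, with value `0` where the map is undefined. -/
def pull (R : Type*) [CommRing R] (f : S → Option S) : Module.End R (S → R) where
  toFun φ I := (f I).elim 0 φ
  map_add' φ ψ := by
    ext I
    cases h : f I <;> simp [h]
  map_smul' c φ := by
    ext I
    cases h : f I <;> simp [h]

lemma pull_apply (f : S → Option S) (φ : S → R) (I : S) : pull R f φ I = (f I).elim 0 φ := rfl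

lemma pull_mul (f g : S → Option S) : pull R f * pull R g = pull R fun I => (f I).bind g := by
  refine LinearMap.ext fun φ => funext fun I => ?_
  simp only [Module.End.mul_apply, pull_apply]
  cases f I <;> simp [pull_apply]

/-- The unit `1 + T`, for an element `T` of square zero. -/
def oneAdd {A : Type*} [Ring A] (T : A) (h : T * T = 0) : Aˣ where
  val := 1 + T
  inv := 1 - T
  val_inv := by noncomm_ring; simp [h]
  inv_val := by noncomm_ring; simp [h]

lemma oneAdd_zpow {A : Type*} [Ring A] (T : A) (h : T * T = 0) (n : ℤ) :
    ((oneAdd T h ^ n : Aˣ) : A) = 1 + n * T := by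
  induction n using Int.induction_on with
  | zero => simp
  | succ n ih =>
    rw [zpow_add_one, Units.val_mul, ih]
    simp only [oneAdd, mul_add, add_mul, mul_assoc, h]
    push_cast
    noncomm_ring
  | pred n ih =>
    rw [zpow_sub_one, Units.val_mul, ih]
    simp only [oneAdd, Units.inv_mk, mul_sub, add_mul, mul_assoc, h]
    push_cast
    noncomm_ring

end Operators

/-! ### The heap representation -/

lemma pull_step_sq (R : Type*) [CommRing R] (hL : Minimal Γ L) (v : V) :
    pull R (step Γ L v) * pull R (step Γ L v) = 0 := by
  rw [pull_mul]
  refine LinearMap.ext fun φ => funext fun I => ?_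
  simp [pull_apply, stepPair_self hL]

/-- The representation of the group on functions on the sets of positions of a minimal list, in
which a generator `v` acts as `1 + T v`. -/
noncomputable def heapRep (R : Type*) [CommRing R] (hL : Minimal Γ L) :
    RAAG Γ →* (Module.End R (Finset (Fin L.length) → R))ˣ :=
  PresentedGroup.toGroup (f := fun v => oneAdd (pull R (step Γ L v)) (pull_step_sq R hL v)) <| by
    rintro _ ⟨u, v, huv, rfl⟩
    simp only [map_mul, map_inv, FreeGroup.lift_apply_of]
    refine commutatorElement_eq_one_iff_commute.2 (Units.ext ?_)
    have : Commute (pull R (step Γ L u)) (pull R (step Γ L v)) := by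
      rw [Commute, SemiconjBy, pull_mul, pull_mul]
      simp only [stepPair_comm huv]
    exact ((Commute.one_left _).add_left ((Commute.one_right _).add_right this)).eq

lemma heapRep_eval_cons (R : Type*) [CommRing R] (hL : Minimal Γ L) (p : V × ℤ) (M : List (V × ℤ))
    (φ : Finset (Fin L.length) → R) (I : Finset (Fin L.length)) :
    ((heapRep R hL (eval Γ (p :: M))) : Module.End R (Finset (Fin L.length) → R)) φ I =
      ((heapRep R hL (eval Γ M)) : Module.End R (Finset (Fin L.length) → R)) φ I + p.2 *
        (step Γ L p.1 I).elim 0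
          (((heapRep R hL (eval Γ M)) : Module.End R (Finset (Fin L.length) → R)) φ) := by
  rw [eval_cons, map_mul, map_zpow, heapRep, PresentedGroup.toGroup.of, Units.val_mul, oneAdd_zpow,
    ← zsmul_eq_mul]
  simp [pull_apply]

/-- Value of the suffix of `L` starting at position `r` on the indicator function of the full set:
it vanishes on sets with fewer than `r` elements, since a suffix can add at most `L.length - r`
positions, and at the set of the first `r` positions the only contribution comes from adding all
remaining positions one by one. -/
lemma heapRep_value (R : Type*) [CommRing R] (hL : Minimal Γ L) (r : ℕ) (hr : r ≤ L.length) :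
    (∀ I : Finset (Fin L.length), I.card < r →
      ((heapRep R hL (eval Γ (L.drop r))) : Module.End R (Finset (Fin L.length) → R))
        (Pi.single Finset.univ 1) I = 0) ∧
    ((heapRep R hL (eval Γ (L.drop r))) : Module.End R (Finset (Fin L.length) → R))
        (Pi.single Finset.univ 1)
      (Finset.univ.filter fun i : Fin L.length => (i : ℕ) < r) =
      ((((L.drop r).map Prod.snd).prod : ℤ) : R) := by
  induction hr using Nat.decreasingInduction with
  | self =>
    constructor
    · intro I hI
      have : I ≠ Finset.univ := by rintro rfl; simp at hI
      simp [eval, this]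
    · simp [eval]
  | of_succ r hr ih =>
    obtain ⟨ih1, ih2⟩ := ih
    have hd : L.drop r = L[r] :: L.drop (r + 1) := List.drop_eq_getElem_cons hr
    rw [hd]
    simp only [heapRep_eval_cons]
    constructor
    · intro I hI
      rw [ih1 I (by omega), zero_add]
      cases hs : step Γ L L[r].1 I with
      | none => simp
      | some J =>
        obtain ⟨i, hi, rfl⟩ := step_eq_some.1 hs
        rw [Option.elim_some, ih1 _ (by rw [Finset.card_insert_of_notMem hi.2.1]; omega), mul_zero]
    · have hs : step Γ L L[r].1 (Finset.univ.filter fun i : Fin L.length => (i : ℕ) < r) =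
          some (Finset.univ.filter fun i : Fin L.length => (i : ℕ) < r + 1) := by
        refine step_eq_some.2 ⟨⟨r, hr⟩, ⟨rfl, by simp, fun j hj _ => ?_, fun j hj _ => ?_⟩, ?_⟩
        · simpa using Fin.lt_def.1 hj
        · simpa using (Fin.lt_def.1 hj).le
        · ext j
          simp [Fin.ext_iff]
          omega
      have hc : (Finset.univ.filter fun i : Fin L.length => (i : ℕ) < r).card < r + 1 := by
        rw [Fin.card_filter_val_lt]
        omega
      rw [hs, ih1 _ hc, Option.elim_some, ih2, zero_add, List.map_cons, List.prod_cons,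
        Int.cast_mul]

end RAAGResidual

/-! ### Residual finiteness -/

open RAAGResidual in
/-- Every right-angled Artin group on a finite simplicial graph is residually finite:
every nontrivial element lies outside some finite-index subgroup. -/
theorem raag_residually_finite {V : Type*} [Fintype V] (Γ : SimpleGraph V)
    (g : RAAG Γ) (hg : g ≠ 1) :
    ∃ B : Subgroup (RAAG Γ), B.FiniteIndex ∧ g ∉ B := by
  classical
  obtain ⟨L, rfl, hL⟩ : ∃ L, eval Γ L = g ∧ Minimal Γ L := by
    obtain ⟨L, hL, hmin⟩ := exists_minimalFor_of_wellFoundedLT (fun L => eval Γ L = g)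
      List.length (exists_eval Γ g)
    refine ⟨L, hL, fun M hM => ?_⟩
    exact (le_total L.length M.length).elim id (hmin (hM.trans hL))
  set N : ℤ := (L.map Prod.snd).prod with hN
  have hN0 : N ≠ 0 := by
    rw [hN, Ne, List.prod_eq_zero_iff]
    intro h
    obtain ⟨p, hp, hp0⟩ := List.mem_map.1 h
    exact hL.ne_zero p hp hp0
  -- This modulus exceeds `|N|`, so `N` survives in `ZMod m`.
  let m : ℕ := N.natAbs + 1
  have hNm : (N : ZMod m) ≠ 0 := by
    rw [Ne, ZMod.intCast_zmod_eq_zero_iff_dvd]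
    intro h
    have := Nat.le_of_dvd (Int.natAbs_pos.2 hN0) (Int.natCast_dvd.1 h)
    omega
  have : NeZero m := ⟨Nat.succ_ne_zero _⟩
  have : Finite (Module.End (ZMod m) (Finset (Fin L.length) → ZMod m)) := DFunLike.finite _
  refine ⟨(heapRep (ZMod m) hL).ker, inferInstance, fun hker => ?_⟩
  have hv := (heapRep_value (ZMod m) hL 0 (Nat.zero_le _)).2
  rw [List.drop_zero, MonoidHom.mem_ker.1 hker, ← hN] at hv
  have hne : (∅ : Finset (Fin L.length)) ≠ Finset.univ := by
    intro h
    have h0 : L.length = 0 := by simpa using (congrArg Finset.card h).symm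
    exact hg (by simp [List.length_eq_zero_iff.1 h0, eval])
  apply hNm
  rw [← hv]
  simp [hne]
end

section
/- Let k > 2 and let S be a finite generating set of SL_k(ℤ). There exists C > 0 such that for every n ≥ 1 and every g ∈ SL_k(ℤ) with g ≠ 1 and word length ‖g‖_S ≤ n, there exists a subgroup B ≤ SL_k(ℤ) with g ∉ B and index [SL_k(ℤ) : B] ≤ C·n^{k-1}. -/
open Filter Asymptotics in
/-- Chebyshev's lower bound in linear form; the constant `log 2 / 2` absorbs the lower-order
terms of `Chebyshev.theta_ge`. -/
theorem eventually_theta_ge :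
    ∀ᶠ m : ℕ in atTop, (m : ℝ) * (Real.log 2 / 2) ≤ Chebyshev.theta m := by
  have h1 : (fun x : ℝ => Real.log (x + 1)) =o[atTop] (fun x : ℝ => x) := by
    have h := (Real.isLittleO_log_id_atTop).comp_tendsto
      (tendsto_atTop_add_const_right atTop (1 : ℝ) tendsto_id)
    refine h.trans_isBigO (IsBigO.of_bound 2 ?_)
    filter_upwards [eventually_ge_atTop (1 : ℝ)] with x hx
    simp only [Function.comp, id, Real.norm_eq_abs]
    rw [abs_of_nonneg (by linarith), abs_of_nonneg (by linarith)]
    linarith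
  have h2 : (fun x : ℝ => 2 * √x * Real.log x) =o[atTop] (fun x : ℝ => x) := by
    have h := (isLittleO_log_rpow_atTop (r := 1 / 2) (by norm_num))
    have h' := (isBigO_refl (fun x : ℝ => 2 * √x) atTop).mul_isLittleO h
    refine h'.trans_isBigO (IsBigO.of_bound 2 ?_)
    filter_upwards [eventually_ge_atTop (1 : ℝ)] with x hx
    rw [← Real.sqrt_eq_rpow, mul_assoc, Real.mul_self_sqrt (by linarith), norm_mul]
    simp
  have h3 := (h1.add h2).bound (show (0 : ℝ) < Real.log 2 / 2 by positivity)
  filter_upwards [tendsto_natCast_atTop_atTop.eventually h3] with m hm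
  have := Chebyshev.theta_ge m
  have h4 := (le_abs_self _).trans hm
  rw [Real.norm_eq_abs, abs_of_nonneg (Nat.cast_nonneg m)] at h4
  linarith

/-- An integer of exponential size in `n` fails to be divisible by some prime of linear size:
otherwise the primorial, which is exponentially large by Chebyshev's bound, would divide it. -/
theorem exists_prime_not_dvd (L : ℕ) :
    ∃ D : ℕ, ∀ n : ℕ, 1 ≤ n → ∀ a : ℤ, a ≠ 0 → |a| ≤ (L : ℤ) ^ n →
      ∃ p : ℕ, p.Prime ∧ p ≤ D * n ∧ ¬ (p : ℤ) ∣ a := by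
  obtain ⟨M, hM⟩ := Filter.eventually_atTop.1 eventually_theta_ge
  have hc : (0 : ℝ) < Real.log 2 / 2 := by positivity
  obtain ⟨E, hE⟩ := exists_nat_gt (Real.log L / (Real.log 2 / 2))
  rw [div_lt_iff₀ hc] at hE
  -- `M` puts `(M + E) * n` in the range of the Chebyshev bound; `E` beats the growth rate `log L`.
  refine ⟨M + E, fun n hn a ha haL => ?_⟩
  by_contra! hdiv
  have hprim : primorial ((M + E) * n) ∣ a.natAbs := by
    refine Finset.prod_primes_dvd _ (fun p hp => ?_) (fun p hp => ?_)
    · exact (Finset.mem_filter.1 hp).2.prime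
    · obtain ⟨hp1, hp2⟩ := Finset.mem_filter.1 hp
      exact Int.natCast_dvd.1 (hdiv p hp2 (by simpa [Nat.lt_succ_iff] using hp1))
  have hle := Nat.le_of_dvd (Int.natAbs_pos.2 ha) hprim
  have haL' : a.natAbs ≤ L ^ n := by zify; exact haL
  have hle2 : (primorial ((M + E) * n) : ℝ) ≤ (L : ℝ) ^ n := by exact_mod_cast hle.trans haL'
  have hlog := Real.log_le_log (by exact_mod_cast primorial_pos _) hle2
  have hθ := hM ((M + E) * n) (by nlinarith)
  rw [Chebyshev.theta_eq_log_primorial, Nat.floor_natCast] at hθ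
  rw [Real.log_pow] at hlog
  have hn' : (1 : ℝ) ≤ n := by exact_mod_cast hn
  have : (E : ℝ) * (Real.log 2 / 2) ≤ ((M + E : ℕ) : ℝ) * (Real.log 2 / 2) := by
    gcongr; omega
  push_cast at *
  nlinarith

theorem abs_list_prod_apply_le {k : ℕ} {M : ℕ}
    (l : List (Matrix.SpecialLinearGroup (Fin k) ℤ))
    (hl : ∀ x ∈ l, ∀ i j, |x.1 i j| ≤ (M : ℤ)) (i j : Fin k) :
    |l.prod.1 i j| ≤ ((k * M : ℕ) : ℤ) ^ l.length := by
  induction l generalizing i with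
  | nil =>
    simp only [List.prod_nil, Matrix.SpecialLinearGroup.coe_one, Matrix.one_apply]
    split_ifs <;> simp
  | cons x l ih =>
    simp only [List.prod_cons, Matrix.SpecialLinearGroup.coe_mul, Matrix.mul_apply,
      List.length_cons]
    calc |∑ t, x.1 i t * l.prod.1 t j| ≤ ∑ t, |x.1 i t * l.prod.1 t j| :=
          Finset.abs_sum_le_sum_abs _ _
      _ ≤ ∑ _t : Fin k, (M : ℤ) * ((k * M : ℕ) : ℤ) ^ l.length := by
          refine Finset.sum_le_sum fun t _ => ?_
          rw [abs_mul]
          exact mul_le_mul (hl x (by simp) i t)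
            (ih (fun y hy => hl y (by simp [hy])) t) (abs_nonneg _) (by positivity)
      _ = _ := by simp; ring

/-- Matrix entries grow at most exponentially in the word length. -/
theorem exists_entry_bound {k : ℕ} (hk : 0 < k)
    (S : Set (Matrix.SpecialLinearGroup (Fin k) ℤ)) (hSfin : S.Finite)
    (hSgen : Subgroup.closure S = ⊤) :
    ∃ L : ℕ, 1 ≤ L ∧ ∀ g : Matrix.SpecialLinearGroup (Fin k) ℤ, ∀ i j,
      |g.1 i j| ≤ (L : ℤ) ^ wordLength S g := by
  have hfin : (S ∪ S⁻¹).Finite := hSfin.union hSfin.inv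
  obtain ⟨M, hM⟩ := (hfin.image fun x => ∑ i, ∑ j, (x.1 i j).natAbs).bddAbove
  have hM' : ∀ x ∈ S ∪ S⁻¹, ∀ i j, |x.1 i j| ≤ ((M + 1 : ℕ) : ℤ) := by
    intro x hx i j
    have h1 : ∑ i, ∑ j, (x.1 i j).natAbs ≤ M := hM ⟨x, hx, rfl⟩
    have h2 : (x.1 i j).natAbs ≤ ∑ j, (x.1 i j).natAbs :=
      Finset.single_le_sum (f := fun j => (x.1 i j).natAbs) (fun _ _ => Nat.zero_le _)
        (Finset.mem_univ j)
    have h3 : ∑ j, (x.1 i j).natAbs ≤ ∑ i, ∑ j, (x.1 i j).natAbs :=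
      Finset.single_le_sum (f := fun i => ∑ j, (x.1 i j).natAbs) (fun _ _ => Nat.zero_le _)
        (Finset.mem_univ i)
    rw [Int.abs_eq_natAbs]
    exact_mod_cast (h2.trans h3).trans (h1.trans (Nat.le_succ M))
  refine ⟨k * (M + 1), Nat.mul_pos hk (by omega), fun g i j => ?_⟩
  have hne : {n | ∃ l : List (Matrix.SpecialLinearGroup (Fin k) ℤ),
      l.length = n ∧ (∀ x ∈ l, x ∈ S ∪ S⁻¹) ∧ l.prod = g}.Nonempty := by
    have hg : g ∈ Subgroup.closure S := hSgen ▸ Subgroup.mem_top g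
    rw [← Subgroup.mem_toSubmonoid, Subgroup.closure_toSubmonoid] at hg
    obtain ⟨l, hl, hp⟩ := Submonoid.exists_list_of_mem_closure hg
    exact ⟨_, l, rfl, hl, hp⟩
  obtain ⟨l, hlen, hl, rfl⟩ := Nat.sInf_mem hne
  unfold wordLength
  rw [← hlen]
  exact abs_list_prod_apply_le l (fun x hx => hM' x (hl x hx)) i j

open scoped LinearAlgebra.Projectivization in
/-- The stabilizer of the line spanned by `v` in the action of `SL_k(ℤ)` on the projective space
over `𝔽_p` excludes every `g` that does not have `v` as an eigenvector mod `p`. -/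
theorem exists_subgroup_of_not_eigenvector {k p : ℕ} [Fact p.Prime]
    (g : Matrix.SpecialLinearGroup (Fin k) ℤ) (v : Fin k → ZMod p) (hv : v ≠ 0)
    (hgv : ∀ c : ZMod p, (g.1.map (Int.cast : ℤ → ZMod p)).mulVec v ≠ c • v) :
    ∃ B : Subgroup (Matrix.SpecialLinearGroup (Fin k) ℤ),
      g ∉ B ∧ B.index ≠ 0 ∧ B.index ≤ k * p ^ (k - 1) := by
  let f := Matrix.SpecialLinearGroup.map (n := Fin k) (Int.castRingHom (ZMod p))
  let x : ℙ (ZMod p) (Fin k → ZMod p) := Projectivization.mk _ v hv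
  let H := MulAction.stabilizer (Matrix.SpecialLinearGroup (Fin k) (ZMod p)) x
  have hcard : Nat.card (ℙ (ZMod p) (Fin k → ZMod p)) ≤ k * p ^ (k - 1) := by
    rw [Projectivization.card_of_finrank (ZMod p) (Fin k → ZMod p) (n := k) (by simp)]
    calc _ ≤ ∑ _i ∈ Finset.range k, p ^ (k - 1) := by
          refine Finset.sum_le_sum fun i hi => ?_
          rw [Nat.card_zmod]
          have := Finset.mem_range.1 hi
          exact Nat.pow_le_pow_right (Fact.out : p.Prime).pos (by omega)
      _ = _ := by simp
  have hH : H.index ≤ k * p ^ (k - 1) := by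
    rw [MulAction.index_stabilizer]
    exact (Set.ncard_le_card _).trans hcard
  have hH0 : H.index ≠ 0 := Subgroup.index_ne_zero_of_finite
  refine ⟨H.comap f, fun hg => ?_, ?_, ?_⟩
  · rw [Subgroup.mem_comap, MulAction.mem_stabilizer_iff, Projectivization.smul_mk,
      Projectivization.mk_eq_mk_iff] at hg
    obtain ⟨c, hc⟩ := hg
    exact hgv c hc.symm
  · rw [Subgroup.index_comap]
    have : H.FiniteIndex := ⟨hH0⟩
    have : H.IsFiniteRelIndex f.range := Subgroup.isFiniteRelIndex_of_finiteIndex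
    exact Subgroup.relIndex_ne_zero
  · rw [Subgroup.index_comap]
    have := Subgroup.relIndex_le_of_le_right (H := H) (le_top : f.range ≤ ⊤)
      (by rwa [Subgroup.relIndex_top_right])
    rw [Subgroup.relIndex_top_right] at this
    exact this.trans hH

/-- **Upper bound on the residual finiteness growth of `SL_k(ℤ)`**: for `k > 2` and any
finite generating set `S` of `SL_k(ℤ)`, there is `C > 0` such that for all `n ≥ 1`, every
nontrivial `g` of word length at most `n` lies outside a subgroup of index at most
`C·n^(k-1)`. -/
theorem SL_residual_finiteness_growth_upper_bound
    (k : ℕ) (hk : 2 < k)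
    (S : Set (Matrix.SpecialLinearGroup (Fin k) ℤ)) (hSfin : S.Finite)
    (hSgen : Subgroup.closure S = ⊤) :
    ∃ C : ℕ, 0 < C ∧ ∀ n : ℕ, 1 ≤ n →
      ∀ g : Matrix.SpecialLinearGroup (Fin k) ℤ, g ≠ 1 → wordLength S g ≤ n →
        ∃ B : Subgroup (Matrix.SpecialLinearGroup (Fin k) ℤ),
          g ∉ B ∧ B.index ≠ 0 ∧ B.index ≤ C * n ^ (k - 1) := by
  obtain ⟨L, hL1, hL⟩ := exists_entry_bound (by omega) S hSfin hSgen
  obtain ⟨D, hD⟩ := exists_prime_not_dvd (2 * L)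
  let K := Nat.card (Matrix.SpecialLinearGroup (Fin k) (ZMod 3))
  have hK : 0 < K := Nat.card_pos
  refine ⟨k * D ^ (k - 1) + K, by omega, fun n hn g hg1 hgn => ?_⟩
  have hent : ∀ i j, |g.1 i j| ≤ (L : ℤ) ^ n := fun i j =>
    (hL g i j).trans (pow_le_pow_right₀ (by exact_mod_cast hL1) hgn)
  have h2L : 2 * (L : ℤ) ^ n ≤ ((2 * L : ℕ) : ℤ) ^ n := by
    push_cast
    rw [mul_pow]
    gcongr
    exact le_self_pow₀ (by norm_num) (by omega)
  have hLn : (0 : ℤ) ≤ (L : ℤ) ^ n := by positivity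
  have key : ∀ p : ℕ, p ≤ D * n → (∃ B : Subgroup (Matrix.SpecialLinearGroup (Fin k) ℤ),
      g ∉ B ∧ B.index ≠ 0 ∧ B.index ≤ k * p ^ (k - 1)) →
      ∃ B : Subgroup (Matrix.SpecialLinearGroup (Fin k) ℤ),
        g ∉ B ∧ B.index ≠ 0 ∧ B.index ≤ (k * D ^ (k - 1) + K) * n ^ (k - 1) := by
    rintro p hp ⟨B, h1, h2, h3⟩
    refine ⟨B, h1, h2, h3.trans ?_⟩
    calc k * p ^ (k - 1) ≤ k * (D * n) ^ (k - 1) := by gcongr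
      _ = (k * D ^ (k - 1)) * n ^ (k - 1) := by rw [mul_pow, mul_assoc]
      _ ≤ _ := by gcongr; omega
  by_cases hoff : ∃ i j, i ≠ j ∧ g.1 i j ≠ 0
  -- If `g i j ≠ 0` mod `p` with `i ≠ j`, then the basis vector `e_j` is not an eigenvector.
  · obtain ⟨i, j, hij, ha⟩ := hoff
    obtain ⟨p, hp, hpn, hpa⟩ := hD n hn (g.1 i j) ha (by linarith [hent i j])
    have := Fact.mk hp
    refine key p hpn (exists_subgroup_of_not_eigenvector g (Pi.single j 1) (by simp) ?_)
    intro c hc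
    have := congrFun hc i
    simp [hij] at this
    exact hpa ((ZMod.intCast_zmod_eq_zero_iff_dvd _ _).1 this)
  push Not at hoff
  by_cases hdiag : ∃ i j, g.1 i i ≠ g.1 j j
  -- If `g` is diagonal with `g i i ≠ g j j` mod `p`, then `e_i + e_j` is not an eigenvector.
  · obtain ⟨i, j, ha⟩ := hdiag
    have hij : i ≠ j := fun h => ha (by rw [h])
    obtain ⟨p, hp, hpn, hpa⟩ := hD n hn (g.1 i i - g.1 j j) (sub_ne_zero.2 ha)
      ((abs_sub _ _).trans (by linarith [hent i i, hent j j]))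
    have := Fact.mk hp
    refine key p hpn (exists_subgroup_of_not_eigenvector g (Pi.single i 1 + Pi.single j 1) ?_ ?_)
    · intro h
      have := congrFun h i
      simp [hij] at this
    intro c hc
    have h1 := congrFun hc i
    have h2 := congrFun hc j
    simp [Matrix.mulVec_add, hij, hij.symm, hoff i j hij, hoff j i hij.symm] at h1 h2
    apply hpa
    rw [← ZMod.intCast_zmod_eq_zero_iff_dvd]
    push_cast
    rw [h1, h2, sub_self]
  push Not at hdiag
  -- There remains a scalar matrix; its determinant forces the scalar to be `-1`.
  let i₀ : Fin k := ⟨0, by omega⟩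
  have hgc : g.1 = Matrix.diagonal fun _ => g.1 i₀ i₀ := by
    ext i j
    rw [Matrix.diagonal_apply]
    split_ifs with h
    · rw [← h, hdiag i i₀]
    · exact hoff i j h
  have hdet := g.2
  rw [hgc, Matrix.det_diagonal, Finset.prod_const, Finset.card_univ, Fintype.card_fin] at hdet
  have hc : g.1 i₀ i₀ = -1 := by
    rcases Int.isUnit_iff.1 (IsUnit.of_pow_eq_one hdet (by omega)) with h | h
    · exfalso
      apply hg1
      apply Subtype.ext
      rw [hgc, h]
      simp
    · exact h
  let f := Matrix.SpecialLinearGroup.map (n := Fin k) (Int.castRingHom (ZMod 3))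
  refine ⟨f.ker, fun hgf => ?_, ?_, ?_⟩
  · rw [MonoidHom.mem_ker] at hgf
    have := congrArg (fun A => A.1 i₀ i₀) hgf
    simp [f, Matrix.SpecialLinearGroup.map_apply_coe, hc] at this
    revert this
    decide
  · rw [Subgroup.index_ker]
    exact Nat.card_pos.ne'
  · rw [Subgroup.index_ker]
    calc Nat.card f.range ≤ K := Subgroup.card_le_card_group _
      _ ≤ k * D ^ (k - 1) + K := by omega
      _ ≤ _ := Nat.le_mul_of_pos_right _ (by positivity)
end

section
/- Let k > 2 and let S be a finite generating set of SL_k(ℤ). There exists C > 0 such that for every n ≥ 1 there exists g ∈ SL_k(ℤ) with g ≠ 1 and ‖g‖_S ≤ C·n such that every subgroup B ≤ SL_k(ℤ) with g ∉ B satisfies [SL_k(ℤ) : B] ≥ n^{k-1}. Hence the residual finiteness growth of SL_k(ℤ) is bounded below by n ↦ (1/C)·n^{k-1} up to rescaling of the argument. -/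
/-! ### Word length and exponential distortion -/

section WordLength

variable {G : Type*} [Group G] {S : Set G}

theorem exists_list_wordLength (hS : Subgroup.closure S = ⊤) (g : G) :
    ∃ l : List G, l.length = wordLength S g ∧ (∀ x ∈ l, x ∈ S ∪ S⁻¹) ∧ l.prod = g := by
  have hg : g ∈ Submonoid.closure (S ∪ S⁻¹) := by
    rw [← Subgroup.closure_toSubmonoid, hS]; trivial
  obtain ⟨l, hl, hprod⟩ := Submonoid.exists_list_of_mem_closure hg
  exact Nat.sInf_mem
    (s := {n | ∃ l : List G, l.length = n ∧ (∀ x ∈ l, x ∈ S ∪ S⁻¹) ∧ l.prod = g})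
    ⟨l.length, l, rfl, hl, hprod⟩

theorem wordLength_le_length {l : List G} (hl : ∀ x ∈ l, x ∈ S ∪ S⁻¹) :
    wordLength S l.prod ≤ l.length :=
  Nat.sInf_le ⟨l, rfl, hl, rfl⟩

theorem wordLength_one : wordLength S (1 : G) = 0 :=
  Nat.le_zero.mp (wordLength_le_length (l := []) (by simp))

theorem wordLength_mul_le (hS : Subgroup.closure S = ⊤) (g h : G) :
    wordLength S (g * h) ≤ wordLength S g + wordLength S h := by
  obtain ⟨l, hl, hl', rfl⟩ := exists_list_wordLength hS g
  obtain ⟨r, hr, hr', rfl⟩ := exists_list_wordLength hS h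
  rw [← hl, ← hr, ← List.prod_append, ← List.length_append]
  refine wordLength_le_length fun x hx ↦ ?_
  rcases List.mem_append.mp hx with hx | hx
  exacts [hl' x hx, hr' x hx]

theorem wordLength_inv_le (hS : Subgroup.closure S = ⊤) (g : G) :
    wordLength S g⁻¹ ≤ wordLength S g := by
  obtain ⟨l, hl, hl', rfl⟩ := exists_list_wordLength hS g
  rw [← hl, List.prod_inv_reverse]
  refine (wordLength_le_length fun x hx ↦ ?_).trans (by simp)
  simp only [List.mem_reverse, List.mem_map] at hx
  obtain ⟨y, hy, rfl⟩ := hx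
  have := hl' y hy
  simp only [Set.mem_union, Set.mem_inv, inv_inv] at this ⊢
  exact this.symm

theorem wordLength_pow_le (hS : Subgroup.closure S = ⊤) (g : G) (N : ℕ) :
    wordLength S (g ^ N) ≤ wordLength S g * N := by
  induction N with
  | zero => simp [wordLength_one]
  | succ N ih =>
    rw [pow_succ, mul_add, mul_one]
    exact (wordLength_mul_le hS _ _).trans (by gcongr)

/-- If `A` conjugates `T v` to `T (α v)` with `α = (2 1; 1 1)`, then all natural numbers below the first
coordinate `s ≥ 2 ^ N` of `α ^ N (1, 0) = (s, t)` occur as first coordinates of `v` for which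
`T v * A ^ N` is a word of length `O(N)`. The factor `A ^ N` is what a Horner scheme accumulates. -/
theorem exists_horner_word (hS : Subgroup.closure S = ⊤) (T : ℤ → ℤ → G)
    (hT : ∀ x y x' y', T x y * T x' y' = T (x + x') (y + y')) (A : G)
    (hA : ∀ x y, A * T x y = T (2 * x + y) (x + y) * A) :
    ∃ K : ℕ, ∀ N : ℕ, ∃ s t : ℤ, 2 ^ N ≤ s ∧ 0 ≤ t ∧ t ≤ s ∧
      (∀ c : ℤ, A ^ N * T c 0 = T (c * s) (c * t) * A ^ N) ∧
      ∀ L : ℤ, 0 ≤ L → L < s → ∃ y, wordLength S (T L y * A ^ N) ≤ K * N := by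
  have hT0 : T 0 0 = 1 := by simpa using hT 0 0 0 0
  refine ⟨∑ c ∈ Finset.range 3, wordLength S (T (c : ℤ) 0 * A), fun N ↦ ?_⟩
  induction N with
  | zero =>
    refine ⟨1, 0, by simp, le_rfl, by simp, by simp, fun L h0 h1 ↦ ⟨0, ?_⟩⟩
    obtain rfl : L = 0 := by omega
    simp [hT0, wordLength_one]
  | succ N ih =>
    obtain ⟨s, t, hs, ht, hts, hconj, hL⟩ := ih
    have hs0 : 0 < s := lt_of_lt_of_le (by positivity) hs
    refine ⟨2 * s + t, s + t, by rw [pow_succ]; linarith, by linarith, by linarith, ?_, ?_⟩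
    · intro c
      rw [pow_succ', mul_assoc, hconj, ← mul_assoc, hA, mul_assoc]
      congr 2 <;> ring
    · intro L h0 h1
      obtain ⟨y, hy⟩ := hL (L % s) (Int.emod_nonneg _ hs0.ne') (Int.emod_lt_of_pos _ hs0)
      have hc0 : 0 ≤ L / s := Int.ediv_nonneg h0 hs0.le
      have hc3 : L / s < 3 := Int.ediv_lt_of_lt_mul hs0 (by linarith)
      obtain ⟨c, hc⟩ := Int.eq_ofNat_of_zero_le hc0
      have hdiv := Int.emod_add_mul_ediv L s
      rw [hc] at hc3 hdiv
      -- `L = (L % s) + c * s` with a digit `c ≤ 2`, as the new `2 * s + t` is at most `3 * s`.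
      have hstep : T L (y + c * t) * A ^ (N + 1) = (T (L % s) y * A ^ N) * (T c 0 * A) := by
        rw [mul_assoc, ← mul_assoc (A ^ N), hconj, mul_assoc, ← pow_succ, ← mul_assoc, hT]
        congr 2
        linarith
      refine ⟨y + c * t, ?_⟩
      rw [hstep, mul_add, mul_one]
      refine (wordLength_mul_le hS _ _).trans (add_le_add hy ?_)
      exact Finset.single_le_sum (f := fun c : ℕ ↦ wordLength S (T (c : ℤ) 0 * A))
        (fun _ _ ↦ Nat.zero_le _) (Finset.mem_range.mpr (by omega))

/-- Exponential distortion: a copy of `ℤ²` on which conjugation realises both elementary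
matrices of `SL₂(ℤ)` contains elements `T 0 L` of word length `O(log L)`. -/
theorem exists_wordLength_le_log (hS : Subgroup.closure S = ⊤) (T : ℤ → ℤ → G)
    (hT : ∀ x y x' y', T x y * T x' y' = T (x + x') (y + y')) (P Q : G)
    (hP : ∀ x y, T x y * P = P * T (x + y) y) (hQ : ∀ x y, T x y * Q = Q * T x (x + y)) :
    ∃ K : ℕ, ∀ (N : ℕ) (L : ℤ), 0 ≤ L → L < 2 ^ N → wordLength S (T 0 L) ≤ K * (N + 1) := by
  have hA : ∀ x y, (Q * P)⁻¹ * T x y = T (2 * x + y) (x + y) * (Q * P)⁻¹ := by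
    intro x y
    rw [inv_mul_eq_iff_eq_mul, ← mul_assoc, eq_mul_inv_iff_mul_eq, ← mul_assoc, hQ, mul_assoc, hP,
      ← mul_assoc]
    congr 2
    ring
  obtain ⟨K, hK⟩ := exists_horner_word hS T hT _ hA
  have hT0 : T 0 0 = 1 := by simpa using hT 0 0 0 0
  set A := (Q * P)⁻¹
  refine ⟨2 * (K + wordLength S A + wordLength S Q), fun N L h0 h1 ↦ ?_⟩
  obtain ⟨s, t, hs, -, -, -, hL⟩ := hK N
  obtain ⟨y, hy⟩ := hL L h0 (h1.trans_le hs)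
  have hlen : wordLength S (T L y) ≤ (K + wordLength S A) * N := by
    have hsplit : T L y = (T L y * A ^ N) * (A ^ N)⁻¹ := by group
    rw [hsplit, add_mul]
    exact (wordLength_mul_le hS _ _).trans (add_le_add hy
      ((wordLength_inv_le hS _).trans (wordLength_pow_le hS _ _)))
  -- The word found controls only the first coordinate; a commutator with `Q` discards `y`.
  have hcomm : T 0 L = (T L y)⁻¹ * (Q⁻¹ * (T L y * Q)) := by
    rw [hQ, inv_mul_cancel_left, eq_inv_mul_iff_mul_eq, hT]
    congr 1 <;> ring
  have e1 := wordLength_mul_le hS (T L y)⁻¹ (Q⁻¹ * (T L y * Q))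
  have e2 := wordLength_mul_le hS Q⁻¹ (T L y * Q)
  have e3 := wordLength_mul_le hS (T L y) Q
  have e4 := wordLength_inv_le hS (T L y)
  have e5 := wordLength_inv_le hS Q
  rw [hcomm]
  nlinarith [Nat.zero_le (wordLength S Q * N), Nat.zero_le (wordLength S A), Nat.zero_le K]

end WordLength

/-! ### Index bounds from the Heisenberg group -/

/-- Two finite-index lattices in `ℤ ^ ι` that pair into `aℤ` have indices with product at least `a ^ |ι|`.
A residue vector `u` mod `a` is determined by its class mod `A` together with the character of
`ℤ ^ ι / D` defined by pairing with the difference of `u` and a fixed representative of its class;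
a finite abelian group has as many characters as elements. -/
theorem pow_card_le_card_quotient_mul {ι : Type*} [Fintype ι] (a : ℕ) [NeZero a]
    (A D : AddSubgroup (ι → ℤ)) [Finite ((ι → ℤ) ⧸ A)] [Finite ((ι → ℤ) ⧸ D)]
    (h : ∀ x ∈ A, ∀ y ∈ D, (a : ℤ) ∣ x ⬝ᵥ y) :
    a ^ Fintype.card ι ≤ Nat.card ((ι → ℤ) ⧸ A) * Nat.card ((ι → ℤ) ⧸ D) := by
  classical
  let Q := (ι → ℤ) ⧸ D
  have : Fintype Q := Fintype.ofFinite _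
  let pair (x : A) : Q →+ ZMod a := QuotientAddGroup.lift D
    { toFun := fun y ↦ ((x.1 ⬝ᵥ y : ℤ) : ZMod a)
      map_zero' := by simp
      map_add' := fun y z ↦ by simp [dotProduct_add] }
    fun y hy ↦ (ZMod.intCast_zmod_eq_zero_iff_dvd _ _).mpr (h x.1 x.2 y hy)
  have hpair (x : A) (y : ι → ℤ) : pair x (QuotientAddGroup.mk y) = ((x.1 ⬝ᵥ y : ℤ) : ZMod a) := rfl
  let σ : (ι → ℤ) ⧸ A → (ι → ℤ) := Quotient.out
  have hσ (u : ι → ℤ) : u - σ (QuotientAddGroup.mk u) ∈ A := by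
    have := QuotientAddGroup.eq.mp (Quotient.out_eq (QuotientAddGroup.mk u : (ι → ℤ) ⧸ A))
    rwa [neg_add_eq_sub] at this
  let lift (u : ι → Fin a) : ι → ℤ := fun i ↦ (u i : ℤ)
  let F : (ι → Fin a) → ((ι → ℤ) ⧸ A) × AddChar Q ℂ := fun u ↦
    (QuotientAddGroup.mk (lift u),
      (ZMod.stdAddChar (N := a)).compAddMonoidHom (pair ⟨_, hσ (lift u)⟩))
  have hF : Function.Injective F := by
    intro u v huv
    obtain ⟨h1, h2⟩ := Prod.ext_iff.mp huv
    simp only [F] at h1 h2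
    funext i
    have h3 := DFunLike.congr_fun h2 (QuotientAddGroup.mk (Pi.single i 1))
    have h4 := ZMod.injective_stdAddChar h3
    rw [hpair, hpair] at h4
    simp only [h1, dotProduct_single, mul_one] at h4
    have h5 := (ZMod.natCast_eq_natCast_iff' (u i) (v i) a).mp (by simpa [lift] using h4)
    rw [Nat.mod_eq_of_lt (u i).2, Nat.mod_eq_of_lt (v i).2] at h5
    exact Fin.ext h5
  have hcard := Nat.card_le_card_of_injective F hF
  rw [Nat.card_prod, Nat.card_eq_fintype_card (α := AddChar Q ℂ), AddChar.card_eq,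
    ← Nat.card_eq_fintype_card] at hcard
  simpa using hcard

/-- In a group with a homomorphism from the Heisenberg group on `ℤ ^ ι × ℤ ^ ι`, a subgroup of
finite index has index at least `a ^ (|ι| + 1)` as soon as it contains the images of no central
elements other than multiples of `a`. -/
theorem pow_card_succ_le_index {G ι : Type*} [Group G] [Fintype ι]
    (M : ℤ → (ι → ℤ) → (ι → ℤ) → G)
    (hM : ∀ z x y z' x' y', M z x y * M z' x' y' = M (z + z' + x ⬝ᵥ y') (x + x') (y + y'))
    (B : Subgroup G) (hB : B.index ≠ 0) (a : ℕ) [NeZero a]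
    (ha : ∀ z, M z 0 0 ∈ B → (a : ℤ) ∣ z) :
    a ^ (Fintype.card ι + 1) ≤ B.index := by
  have hM0 : M 0 0 0 = 1 := by simpa using hM 0 0 0 0 0 0
  have hinv (z x y) : (M z x y)⁻¹ = M (-z + x ⬝ᵥ y) (-x) (-y) := by
    rw [inv_eq_iff_mul_eq_one, hM, ← hM0]
    congr 1 <;> simp
  let A : AddSubgroup (ι → ℤ) :=
    { carrier := {x | ∃ z, M z x 0 ∈ B}
      zero_mem' := ⟨0, hM0 ▸ B.one_mem⟩
      add_mem' := by
        rintro x x' ⟨z, h⟩ ⟨z', h'⟩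
        exact ⟨_, by simpa [hM] using B.mul_mem h h'⟩
      neg_mem' := by
        rintro x ⟨z, h⟩
        exact ⟨_, by simpa [hinv] using B.inv_mem h⟩ }
  let D : AddSubgroup (ι → ℤ) :=
    { carrier := {y | ∃ z x, M z x y ∈ B}
      zero_mem' := ⟨0, 0, hM0 ▸ B.one_mem⟩
      add_mem' := by
        rintro y y' ⟨z, x, h⟩ ⟨z', x', h'⟩
        exact ⟨_, _, by simpa only [hM] using B.mul_mem h h'⟩
      neg_mem' := by
        rintro y ⟨z, x, h⟩
        exact ⟨_, _, by simpa only [hinv] using B.inv_mem h⟩ }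
  have hAD : ∀ x ∈ A, ∀ y ∈ D, (a : ℤ) ∣ x ⬝ᵥ y := by
    rintro x ⟨z, hx⟩ y ⟨z', x', hy⟩
    refine ha _ ?_
    have hcomm : M (x ⬝ᵥ y) 0 0 = M z x 0 * M z' x' y * (M z x 0)⁻¹ * (M z' x' y)⁻¹ := by
      rw [eq_mul_inv_iff_mul_eq, eq_mul_inv_iff_mul_eq]
      simp only [hM]
      congr 1 <;> simp [add_comm, add_left_comm]
    rw [hcomm]
    exact B.mul_mem (B.mul_mem (B.mul_mem hx hy) (B.inv_mem hx)) (B.inv_mem hy)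
  -- Coset representatives `(0, 0, y) * (z, x, 0)` with `z < a`, `x` mod `A` and `y` mod `D` lie in
  -- different cosets of `B`.
  let F : Fin a × ((ι → ℤ) ⧸ A) × ((ι → ℤ) ⧸ D) → G ⧸ B := fun p ↦
    QuotientGroup.mk (M 0 0 p.2.2.out * M (p.1 : ℤ) p.2.1.out 0)
  have hF : Function.Injective F := by
    rintro ⟨z, x, y⟩ ⟨z', x', y'⟩ h
    have hmem := QuotientGroup.eq.mp h
    have hy : y = y' := by
      rw [← Quotient.out_eq y, ← Quotient.out_eq y']
      refine QuotientAddGroup.eq.mpr ?_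
      simp only [hM, hinv] at hmem
      exact ⟨_, _, by simpa only [zero_add, add_zero] using hmem⟩
    subst hy
    rw [mul_inv_rev, mul_assoc, inv_mul_cancel_left, hinv, hM] at hmem
    have hx : x = x' := by
      rw [← Quotient.out_eq x, ← Quotient.out_eq x']
      refine QuotientAddGroup.eq.mpr ?_
      exact ⟨_, by simpa only [neg_zero, add_zero] using hmem⟩
    subst hx
    have hz := ha (-z + z') (by simpa using hmem)
    have hz' : z = z' := by
      have h1 := z.2
      have h2 := z'.2
      obtain ⟨c, hc⟩ := hz
      have hc0 : c = 0 := by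
        by_contra hc0
        rcases lt_or_gt_of_ne hc0 with h | h <;> nlinarith
      subst hc0
      exact Fin.ext (by omega)
    rw [hz']
  have : B.FiniteIndex := ⟨hB⟩
  have : Finite (G ⧸ B) := inferInstance
  have hfin := Finite.of_injective F hF
  have : Finite (((ι → ℤ) ⧸ A) × ((ι → ℤ) ⧸ D)) := Finite.prod_right (Fin a)
  have : Finite ((ι → ℤ) ⧸ A) := Finite.prod_left ((ι → ℤ) ⧸ D)
  have : Finite ((ι → ℤ) ⧸ D) := Finite.prod_right ((ι → ℤ) ⧸ A)
  have hcard := Nat.card_le_card_of_injective F hF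
  rw [Nat.card_prod, Nat.card_prod, Nat.card_fin] at hcard
  calc a ^ (Fintype.card ι + 1) = a * a ^ Fintype.card ι := pow_succ' _ _
    _ ≤ _ := by gcongr; exact pow_card_le_card_quotient_mul a A D hAD
    _ ≤ B.index := hcard

/-- A subgroup of finite index less than `n ^ (|ι| + 1)` contains the central element `lcm(1, …, n)`,
since it meets the centre in the multiples of some `b` with `|b| < n`. -/
theorem mem_of_index_lt {G ι : Type*} [Group G] [Fintype ι]
    (M : ℤ → (ι → ℤ) → (ι → ℤ) → G)
    (hM : ∀ z x y z' x' y', M z x y * M z' x' y' = M (z + z' + x ⬝ᵥ y') (x + x') (y + y'))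
    (B : Subgroup G) (hB : B.index ≠ 0) (n : ℕ) (hn : B.index < n ^ (Fintype.card ι + 1)) :
    M (Nat.lcmUpto n) 0 0 ∈ B := by
  have hM0 : M 0 0 0 = 1 := by simpa using hM 0 0 0 0 0 0
  let φ : Multiplicative ℤ →* G :=
    { toFun := fun z ↦ M z.toAdd 0 0
      map_one' := hM0
      map_mul' := fun z z' ↦ by simp [hM] }
  have : B.FiniteIndex := ⟨hB⟩
  obtain ⟨b, hb⟩ := Int.subgroup_cyclic (Subgroup.toAddSubgroup' (B.comap φ))
  have hmem (z : ℤ) : M z 0 0 ∈ B ↔ b ∣ z := by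
    rw [← Int.mem_zmultiples_iff, AddSubgroup.zmultiples_eq_closure, ← hb]
    rfl
  have hb0 : b ≠ 0 := by
    rintro rfl
    obtain ⟨m, hm, -, hpow⟩ := B.exists_pow_mem_of_index_ne_zero hB (M 1 0 0)
    have : M 1 0 0 ^ m = M m 0 0 := by
      simpa [φ] using (map_pow φ (Multiplicative.ofAdd 1) m).symm
    rw [this, hmem] at hpow
    simp at hpow
    omega
  have : NeZero b.natAbs := ⟨by simpa using hb0⟩
  have hle := pow_card_succ_le_index M hM B hB b.natAbs
    fun z hz ↦ Int.natAbs_dvd.mpr ((hmem z).mp hz)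
  have hlt : b.natAbs < n := lt_of_pow_lt_pow_left₀ _ (Nat.zero_le _) (hle.trans_lt hn)
  rw [hmem, ← Int.natAbs_dvd, Int.natCast_dvd_natCast]
  exact Finset.dvd_lcm (f := id)
    (Finset.mem_Icc.mpr ⟨Int.natAbs_pos.mpr hb0, hlt.le⟩)

theorem lcmUpto_lt_two_pow (n : ℕ) (hn : 1 ≤ n) : Nat.lcmUpto n < 2 ^ (8 * n) := by
  have h1 := Chebyshev.psi_le_const_mul_self (x := n) (by positivity)
  rw [Chebyshev.psi_eq_log_lcmUpto] at h1
  have h2 : Real.log 4 = 2 * Real.log 2 := by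
    rw [show (4 : ℝ) = 2 ^ 2 by norm_num, Real.log_pow]; norm_num
  have h3 := Real.log_two_gt_d9
  have hn' : (1 : ℝ) ≤ n := by exact_mod_cast hn
  have h4 : Real.log (Nat.lcmUpto n) < Real.log ((2 ^ (8 * n) : ℕ) : ℝ) := by
    push_cast
    rw [Real.log_pow]
    push_cast
    nlinarith
  exact_mod_cast (Real.log_lt_log_iff (by exact_mod_cast Nat.lcmUpto_pos n)
    (by positivity)).mp h4

/-! ### The Heisenberg group in `SL` -/

section Matrices

open Matrix

variable {m : ℕ}

/-- The vector `(0, x₁, …, x_m, 0)`. -/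
def padVec (x : Fin m → ℤ) : Fin (m + 2) → ℤ := Fin.cons 0 (Fin.snoc x 0 : Fin (m + 1) → ℤ)

theorem padVec_zero (x : Fin m → ℤ) : padVec x 0 = 0 := rfl

theorem padVec_last (x : Fin m → ℤ) : padVec x (Fin.last _) = 0 := by
  simp [padVec, ← Fin.succ_last]

theorem padVec_add (x y : Fin m → ℤ) : padVec (x + y) = padVec x + padVec y := by
  funext i
  refine Fin.cases rfl (fun i ↦ ?_) i
  refine Fin.lastCases ?_ (fun i ↦ ?_) i <;> simp [padVec]

theorem padVec_dotProduct (x y : Fin m → ℤ) : padVec x ⬝ᵥ padVec y = x ⬝ᵥ y := by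
  simp [dotProduct, padVec, Fin.sum_univ_succ (n := m + 1), Fin.sum_univ_castSucc (n := m)]

/-- The matrix `1 + z e_{0,m+1} + ∑ x_j e_{0,j} + ∑ y_j e_{j,m+1}` of the Heisenberg group, where
`j` runs over the `m` indices strictly between `0` and `m + 1`. -/
def heisMatrix (z : ℤ) (x y : Fin m → ℤ) : Matrix (Fin (m + 2)) (Fin (m + 2)) ℤ :=
  1 + vecMulVec (Pi.single 0 1) (padVec x + Pi.single (Fin.last _) z)
    + vecMulVec (padVec y) (Pi.single (Fin.last _) 1)

theorem heisMatrix_mul (z : ℤ) (x y : Fin m → ℤ) (z' : ℤ) (x' y' : Fin m → ℤ) :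
    heisMatrix z x y * heisMatrix z' x' y' = heisMatrix (z + z' + x ⬝ᵥ y') (x + x') (y + y') := by
  have h0 : (0 : Fin (m + 2)) ≠ Fin.last (m + 1) := (Fin.last_pos).ne
  simp only [heisMatrix, mul_add, add_mul, one_mul, mul_one, vecMulVec_mul_vecMulVec,
    dotProduct_single, single_dotProduct, padVec_zero, padVec_last, padVec_add,
    padVec_dotProduct, Pi.single_eq_of_ne h0, Pi.single_add, vecMulVec_add, add_vecMulVec]
  ext i j
  simp [vecMulVec_apply, Pi.single_apply]
  split_ifs <;> ring

theorem det_heisMatrix (z : ℤ) (x y : Fin m → ℤ) : (heisMatrix z x y).det = 1 := by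
  have h0 : (Fin.last (m + 1) : Fin (m + 2)) ≠ 0 := (Fin.last_pos).ne'
  have hsplit : heisMatrix z x y = heisMatrix 0 0 y * heisMatrix z x 0 := by
    simp [heisMatrix_mul]
  have hp : padVec (0 : Fin m → ℤ) = 0 := by simpa using padVec_add (0 : Fin m → ℤ) 0
  rw [hsplit, det_mul]
  simp only [heisMatrix, hp, zero_vecMulVec, Pi.single_zero, add_zero, vecMulVec_zero]
  rw [vecMulVec_eq Unit, vecMulVec_eq Unit, det_one_add_replicateCol_mul_replicateRow,
    det_one_add_replicateCol_mul_replicateRow]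
  simp [padVec_zero, padVec_last, h0.symm]

/-- `heisMatrix` as an element of `SL`. -/
def heis (z : ℤ) (x y : Fin m → ℤ) : SpecialLinearGroup (Fin (m + 2)) ℤ :=
  ⟨heisMatrix z x y, det_heisMatrix z x y⟩

theorem heis_mul (z : ℤ) (x y : Fin m → ℤ) (z' : ℤ) (x' y' : Fin m → ℤ) :
    heis z x y * heis z' x' y' = heis (z + z' + x ⬝ᵥ y') (x + x') (y + y') :=
  Subtype.ext (heisMatrix_mul z x y z' x' y')

theorem heis_ne_one {z : ℤ} (hz : z ≠ 0) : heis z 0 (0 : Fin m → ℤ) ≠ 1 := by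
  intro h
  have h1 := congrArg (fun g : SpecialLinearGroup (Fin (m + 2)) ℤ ↦ g.1 0 (Fin.last _)) h
  simp [heis, heisMatrix, vecMulVec_apply, padVec_last, padVec_zero, (Fin.last_pos).ne] at h1
  exact hz h1

/-- The elementary matrix `1 + e_{m+2,1}`, with indices from `0` to `m + 2`. -/
def lowerShear (m : ℕ) : SpecialLinearGroup (Fin (m + 3)) ℤ :=
  ⟨1 + vecMulVec (Pi.single (Fin.last _) 1) (padVec (Pi.single 0 1)), by
    rw [vecMulVec_eq Unit, det_one_add_replicateCol_mul_replicateRow]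
    simp [padVec_last]⟩

theorem heis_mul_lowerShear (x y : ℤ) :
    heis y (Pi.single 0 x) 0 * lowerShear m = lowerShear m * heis y (Pi.single 0 (x + y)) 0 := by
  have h0 : (Fin.last (m + 2) : Fin (m + 3)) ≠ 0 := (Fin.last_pos).ne'
  have hp : padVec (0 : Fin (m + 1) → ℤ) = 0 := by simpa using padVec_add (0 : Fin (m + 1) → ℤ) 0
  have hsmul : padVec (Pi.single 0 y : Fin (m + 1) → ℤ) = y • padVec (Pi.single 0 1) := by
    funext i
    refine Fin.cases (by simp [padVec]) (fun i ↦ ?_) i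
    refine Fin.lastCases ?_ (fun i ↦ ?_) i <;> simp [padVec, Pi.single_apply]
  have hl (x : ℤ) : padVec (Pi.single 0 x : Fin (m + 1) → ℤ) (Fin.last (m + 2)) = 0 :=
    padVec_last _
  refine Subtype.ext ?_
  change heisMatrix y (Pi.single 0 x) 0 * (1 + _) = (1 + _) * heisMatrix y (Pi.single 0 (x + y)) 0
  simp only [heisMatrix, hp, zero_vecMulVec, add_zero, mul_add, add_mul, one_mul, mul_one,
    vecMulVec_mul_vecMulVec, dotProduct_single, padVec_zero,
    Pi.single_add, padVec_add, hsmul]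
  ext i j
  simp [vecMulVec_apply, Pi.single_apply, hl]
  split_ifs <;> ring

end Matrices

/-! ### The lower bound -/

/-- **Lower bound on the residual finiteness growth of `SL_k(ℤ)`**: for `k > 2` and any
finite generating set `S` of `SL_k(ℤ)`, there is `C > 0` such that for every `n ≥ 1` there
is a nontrivial `g` of word length at most `C·n` such that every subgroup `B` with `g ∉ B`
has index at least `n^(k-1)` (where an infinite-index subgroup, encoded by
`Subgroup.index B = 0`, certainly has index at least `n^(k-1)`). -/
theorem SL_residual_finiteness_growth_lower_bound
    (k : ℕ) (hk : 2 < k)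
    (S : Set (Matrix.SpecialLinearGroup (Fin k) ℤ)) (hSfin : S.Finite)
    (hSgen : Subgroup.closure S = ⊤) :
    ∃ C : ℕ, 0 < C ∧ ∀ n : ℕ, 1 ≤ n →
      ∃ g : Matrix.SpecialLinearGroup (Fin k) ℤ, g ≠ 1 ∧ wordLength S g ≤ C * n ∧
        ∀ B : Subgroup (Matrix.SpecialLinearGroup (Fin k) ℤ), g ∉ B →
          (B.index = 0 ∨ n ^ (k - 1) ≤ B.index) := by
  obtain ⟨m, rfl⟩ : ∃ m, k = m + 3 := ⟨k - 3, by omega⟩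
  let T : ℤ → ℤ → Matrix.SpecialLinearGroup (Fin (m + 3)) ℤ :=
    fun x y ↦ heis y (Pi.single 0 x) (0 : Fin (m + 1) → ℤ)
  have hT : ∀ x y x' y', T x y * T x' y' = T (x + x') (y + y') := by
    intro x y x' y'
    simp [T, heis_mul, Pi.single_add]
  have hQ : ∀ x y, T x y * heis 0 0 (Pi.single 0 1) = heis 0 0 (Pi.single 0 1) * T x (x + y) := by
    intro x y
    simp [T, heis_mul, add_comm]
  obtain ⟨K, hK⟩ := exists_wordLength_le_log hSgen T hT (lowerShear m) _ heis_mul_lowerShear hQ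
  refine ⟨9 * K + 1, by omega, fun n hn ↦
    ⟨heis (Nat.lcmUpto n) 0 0, heis_ne_one (by exact_mod_cast (Nat.lcmUpto_pos n).ne'), ?_, ?_⟩⟩
  · have h := hK (8 * n) (Nat.lcmUpto n) (by positivity) (by exact_mod_cast lcmUpto_lt_two_pow n hn)
    simp only [T, Pi.single_zero] at h
    nlinarith [Nat.zero_le K]
  · intro B hgB
    by_contra! hB
    refine hgB (mem_of_index_lt heis heis_mul B hB.1 n ?_)
    simpa using hB.2
end

section
/- Let H ≤ G be a finite-index subgroup and Ω a class of subgroups of G. Then: (1) for every g ∈ H with g ∉ Λ_{Ω∩H}, D_G^{Ω}(g) ≤ [G : H] · D_H^{Ω∩H}(g); and (2) if moreover H ∈ Ω, then for every g ∈ G with g ∉ H, D_G^{Ω}(g) ≤ [G : H]. -/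
/-- The class `Ω ∩ H = {Δ ∩ H : Δ ∈ Ω}` of subgroups of `H` obtained by intersecting the
members of a class `Ω` of subgroups of `G` with a subgroup `H ≤ G`. -/
def interH {G : Type*} [Group G] (Ω : Set (Subgroup G)) (H : Subgroup G) :
    Set (Subgroup ↥H) :=
  {Δ | ∃ B ∈ Ω, Δ = B.subgroupOf H}

theorem resD_le_eIndex {G : Type*} [Group G] {Ω : Set (Subgroup G)} {g : G} {B : Subgroup G}
    (hB : B ∈ Ω) (hg : g ∉ B) : resD Ω g ≤ eIndex B :=
  iInf₂_le B ⟨hB, hg⟩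

theorem eIndex_le_index_mul_eIndex_subgroupOf {G : Type*} [Group G] (H B : Subgroup G)
    (hH : H.index ≠ 0) : eIndex B ≤ (H.index : ℕ∞) * eIndex (B.subgroupOf H) := by
  by_cases h : (B.subgroupOf H).index = 0
  · rw [eIndex, eIndex, if_pos h, ENat.mul_top (by exact_mod_cast hH)]
    exact le_top
  · have hmul : (B ⊓ H).index = H.index * (B.subgroupOf H).index := by
      rw [← Subgroup.relIndex_mul_index (inf_le_right : B ⊓ H ≤ H), Subgroup.inf_relIndex_right,
        mul_comm, Subgroup.relIndex]
    have hne : (B ⊓ H).index ≠ 0 := hmul ▸ mul_ne_zero hH h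
    have hdvd : B.index ∣ (B ⊓ H).index := Subgroup.index_dvd_of_le inf_le_left
    have hB : B.index ≠ 0 := ne_zero_of_dvd_ne_zero hne hdvd
    rw [eIndex, eIndex, if_neg hB, if_neg h, ← Nat.cast_mul, ← hmul]
    exact_mod_cast Nat.le_of_dvd (Nat.pos_of_ne_zero hne) hdvd

/-- Let `H ≤ G` be a finite-index subgroup and `Ω` a class of subgroups of `G`. Then:
(1) for every `g ∈ H` with `g ∉ Λ_{Ω∩H}`, `D_G^{Ω}(g) ≤ [G:H] · D_H^{Ω∩H}(g)`; and
(2) if moreover `H ∈ Ω`, then every `g ∈ G` with `g ∉ H` has `D_G^{Ω}(g) ≤ [G:H]`. -/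
theorem resD_le_of_finiteIndex_supergroup
    {G : Type*} [Group G] (H : Subgroup G) (hHfi : H.FiniteIndex)
    (Ω : Set (Subgroup G)) :
    (∀ g : ↥H, (∃ Δ ∈ interH Ω H, g ∉ Δ) →
      resD Ω (g : G) ≤ (H.index : ℕ∞) * resD (interH Ω H) g) ∧
    (H ∈ Ω → ∀ g : G, g ∉ H → resD Ω g ≤ (H.index : ℕ∞)) := by
  have hH : H.index ≠ 0 := hHfi.index_ne_zero
  refine ⟨fun g _ => ?_, fun hmem g hg => ?_⟩
  -- Since `[G : H] ≠ 0`, multiplication by it commutes with infima in `ℕ∞`.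
  · rw [resD.eq_def (interH Ω H), ENat.mul_iInf_of_ne (by exact_mod_cast hH)]
    refine le_iInf fun Δ => ?_
    rw [ENat.mul_iInf_of_ne (by exact_mod_cast hH)]
    refine le_iInf ?_
    rintro ⟨⟨B, hB, rfl⟩, hgB⟩
    exact (resD_le_eIndex hB fun h => hgB (Subgroup.mem_subgroupOf.2 h)).trans
      (eIndex_le_index_mul_eIndex_subgroupOf H B hH)
  · exact (resD_le_eIndex hmem hg).trans (by rw [eIndex, if_neg hH])
end

section
/- Fix k ≥ 3 and let g_n = E_{1,k}(lcm(1,2,…,n)) ∈ SL_k(ℤ), the elementary matrix equal to the identity except with entry lcm(1,…,n) in position (1,k). Then every subgroup B ≤ SL_k(ℤ) with g_n ∉ B satisfies [SL_k(ℤ) : B] ≥ n^{k-1}; that is, D_{SL_k(ℤ)}(g_n) ≥ n^{k-1}. -/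
/-!
Let `c ≥ 0` generate the group of all `s` with `E_{1,k}(s) ∈ B`. The point is that
`c ^ (k - 1) ≤ [SL_k(ℤ) : B]` for every `B` of finite index. Granting this, if the index is less
than `n ^ (k - 1)` then `1 ≤ c ≤ n`, so `c ∣ lcm(1, …, n)` and `g_n ∈ B`.

For the bound, put `m = k - 2` and work in the Heisenberg group of matrices
`H a b s = 1 + e₁ aᵀ + b e_kᵀ + s e₁ e_kᵀ`, with `a, b ∈ ℤ^m` placed in the middle coordinates.
Let `P ≤ ℤ^m` be the group of all `a` with some `H a b s ∈ B`, and `L ≤ ℤ^m` the group of all `b`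
with some `H 0 b s ∈ B`. Distinct classes of `(a, b, s)` in `ℤ^m / P × ℤ^m / L × ℤ / c` give
distinct cosets of `B`, so `[ℤ^m : P] * [ℤ^m : L] * c ≤ [SL_k(ℤ) : B]`
(`heisenberg_index_le`). The commutator of `H a b s` and `H 0 b' s'` is `H 0 0 (a ⬝ b')`, so the
pairing of `P` with `L` takes values in `cℤ`. Duality of finite abelian groups then gives
`c ^ m ≤ [ℤ^m : P] * [ℤ^m : L]` (`pow_le_index_mul_index`).
-/

open Matrix in
/-- If `P, L ≤ ℤ^m` pair into `cℤ`, then `P / (P ∩ cℤ^m)` embeds into the character group of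
`ℤ^m / L`, so it has at most `[ℤ^m : L]` elements, while `[ℤ^m : cℤ^m] = c ^ m`. -/
lemma pow_le_index_mul_index (m c : ℕ) (hc : c ≠ 0) (P L : AddSubgroup (Fin m → ℤ))
    (hP : P.index ≠ 0) (hL : L.index ≠ 0)
    (h : ∀ a ∈ P, ∀ b ∈ L, (c : ℤ) ∣ a ⬝ᵥ b) : c ^ m ≤ P.index * L.index := by
  have : NeZero c := ⟨hc⟩
  let π : (Fin m → ℤ) →+ (Fin m → ZMod c) :=
    { toFun := fun a i => (a i : ZMod c)
      map_zero' := by ext; simp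
      map_add' := fun a b => by ext; simp }
  have hπ : Function.Surjective π := fun x =>
    ⟨fun i => (x i).val, by ext i; simp [π]⟩
  have hK : π.ker.index = c ^ m := by
    rw [AddSubgroup.index_ker, AddMonoidHom.range_eq_top.2 hπ, AddSubgroup.card_top]
    simp
  have hLfin : Finite ((Fin m → ℤ) ⧸ L) := Nat.finite_of_card_ne_zero hL
  have := Fintype.ofFinite ((Fin m → ℤ) ⧸ L)
  let φ (a : P) : (Fin m → ℤ) ⧸ L →+ ZMod c := QuotientAddGroup.lift L
    { toFun := fun b => ((a.1 ⬝ᵥ b : ℤ) : ZMod c)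
      map_zero' := by simp
      map_add' := fun a b => by simp [dotProduct_add] }
    (fun b hb => by
      rw [AddMonoidHom.mem_ker]
      exact (ZMod.intCast_zmod_eq_zero_iff_dvd _ _).2 (h _ a.2 b hb))
  let Φ (a : P) : AddChar ((Fin m → ℤ) ⧸ L) ℂ := ZMod.stdAddChar.compAddMonoidHom (φ a)
  have hΦ : ∀ a a' : P, Φ a = Φ a' → π a = π a' := by
    intro a a' haa
    ext i
    have h1 := DFunLike.congr_fun haa (QuotientAddGroup.mk (Pi.single i 1))
    have h2 := ZMod.injective_stdAddChar (N := c) h1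
    simpa [φ, π] using h2
  have hrel : π.ker.relIndex P ≤ L.index := by
    have e1 : π.ker.relIndex P = (π.comp P.subtype).ker.index := rfl
    have : Nat.card (π.comp P.subtype).range ≤ Nat.card (AddChar ((Fin m → ℤ) ⧸ L) ℂ) := by
      choose f hf using fun x : (π.comp P.subtype).range => x.2
      apply Nat.card_le_card_of_injective (fun x => Φ (f x))
      intro x y hxy
      apply Subtype.ext
      rw [← hf x, ← hf y]
      exact hΦ _ _ hxy
    rw [e1, AddSubgroup.index_ker]
    refine this.trans ?_
    rw [Nat.card_eq_fintype_card, AddChar.card_eq, ← Nat.card_eq_fintype_card]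
    rfl
  have hinf : π.ker.relIndex P * P.index = (π.ker ⊓ P).index := by
    rw [← AddSubgroup.inf_relIndex_right, AddSubgroup.relIndex_mul_index inf_le_right]
  have hne : (π.ker ⊓ P).index ≠ 0 :=
    AddSubgroup.index_inf_ne_zero (by rw [hK]; exact pow_ne_zero _ hc) hP
  calc c ^ m = π.ker.index := hK.symm
    _ ≤ (π.ker ⊓ P).index :=
      Nat.le_of_dvd (Nat.pos_of_ne_zero hne) (AddSubgroup.index_dvd_of_le inf_le_left)
    _ = π.ker.relIndex P * P.index := hinf.symm
    _ ≤ L.index * P.index := Nat.mul_le_mul_right _ hrel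
    _ = _ := mul_comm _ _

open Matrix in
/-- Here `H` is a homomorphism from the integral Heisenberg group of rank `2m + 1`, written in
coordinates, and `c` generates the set of central elements that `H` sends into `B`. -/
lemma heisenberg_index_le {G : Type*} [Group G] (m : ℕ)
    (H : (Fin m → ℤ) → (Fin m → ℤ) → ℤ → G)
    (hmul : ∀ a b s a' b' s', H a b s * H a' b' s' = H (a + a') (b + b') (s + s' + a ⬝ᵥ b'))
    (B : Subgroup G) (hB : B.index ≠ 0) (c : ℕ) (hc : c ≠ 0)
    (hcB : ∀ s, H 0 0 s ∈ B ↔ (c : ℤ) ∣ s) : c ^ (m + 1) ≤ B.index := by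
  have : NeZero c := ⟨hc⟩
  have hone : H 0 0 0 = 1 := by
    have := hmul 0 0 0 0 0 0
    simpa using this
  have hinv : ∀ a b s, (H a b s)⁻¹ = H (-a) (-b) (-s + a ⬝ᵥ b) := by
    intro a b s
    rw [inv_eq_iff_mul_eq_one, hmul, ← hone]
    congr 1 <;> simp
  let P : AddSubgroup (Fin m → ℤ) :=
    { carrier := {a | ∃ b s, H a b s ∈ B}
      zero_mem' := ⟨0, 0, by rw [hone]; exact B.one_mem⟩
      add_mem' := by
        rintro a a' ⟨b, s, h⟩ ⟨b', s', h'⟩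
        exact ⟨_, _, hmul a b s a' b' s' ▸ B.mul_mem h h'⟩
      neg_mem' := by
        rintro a ⟨b, s, h⟩
        exact ⟨_, _, hinv a b s ▸ B.inv_mem h⟩ }
  let L : AddSubgroup (Fin m → ℤ) :=
    { carrier := {b | ∃ s, H 0 b s ∈ B}
      zero_mem' := ⟨0, by rw [hone]; exact B.one_mem⟩
      add_mem' := by
        rintro b b' ⟨s, h⟩ ⟨s', h'⟩
        have := B.mul_mem h h'
        rw [hmul, add_zero] at this
        exact ⟨_, this⟩
      neg_mem' := by
        rintro b ⟨s, h⟩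
        have := B.inv_mem h
        rw [hinv, neg_zero] at this
        exact ⟨_, this⟩ }
  have hPL : ∀ a ∈ P, ∀ b ∈ L, (c : ℤ) ∣ a ⬝ᵥ b := by
    rintro a ⟨b₁, s₁, hx⟩ b ⟨s, hy⟩
    rw [← hcB]
    have key : H a b₁ s₁ * H 0 b s = H 0 b s * H a b₁ s₁ * H 0 0 (a ⬝ᵥ b) := by
      simp only [hmul]
      congr 1
      · simp
      · simp [add_comm]
      · simp [add_comm]
    rw [← B.mul_mem_cancel_left (B.mul_mem hy hx), ← key]
    exact B.mul_mem hx hy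
  have : Finite (G ⧸ B) := Nat.finite_of_card_ne_zero hB
  let F : ((Fin m → ℤ) ⧸ P) × ((Fin m → ℤ) ⧸ L) × ZMod c → G ⧸ B :=
    fun x => QuotientGroup.mk (H x.1.out x.2.1.out (x.2.2.val : ℤ))
  have hF : Function.Injective F := by
    rintro ⟨i, j, t⟩ ⟨i', j', t'⟩ hx
    have hx := QuotientGroup.eq.1 hx
    rw [hinv, hmul] at hx
    have hi : i = i' := by
      rw [← QuotientAddGroup.out_eq' i, ← QuotientAddGroup.out_eq' i']
      exact QuotientAddGroup.eq.2 ⟨_, _, hx⟩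
    subst hi
    simp only [neg_add_cancel] at hx
    have hj : j = j' := by
      rw [← QuotientAddGroup.out_eq' j, ← QuotientAddGroup.out_eq' j']
      exact QuotientAddGroup.eq.2 ⟨_, hx⟩
    subst hj
    simp only [neg_add_cancel, hcB] at hx
    have ht : t = t' := by
      have h0 : (c : ℤ) ∣ (t'.val : ℤ) - t.val := by
        convert hx using 1
        rw [neg_dotProduct]
        ring
      have := (ZMod.intCast_zmod_eq_zero_iff_dvd _ _).2 h0
      simp only [Int.cast_sub, Int.cast_natCast, ZMod.natCast_zmod_val] at this
      exact (sub_eq_zero.1 this).symm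
    rw [ht]
  have hfin := Finite.of_injective F hF
  have hPfin : Finite ((Fin m → ℤ) ⧸ P) :=
    Finite.of_surjective (fun x : ((Fin m → ℤ) ⧸ P) × ((Fin m → ℤ) ⧸ L) × ZMod c => x.1)
      Prod.fst_surjective
  have hLfin : Finite ((Fin m → ℤ) ⧸ L) :=
    Finite.of_surjective (fun x : ((Fin m → ℤ) ⧸ P) × ((Fin m → ℤ) ⧸ L) × ZMod c => x.2.1)
      (Prod.fst_surjective.comp Prod.snd_surjective)
  have hcard : P.index * (L.index * c) ≤ B.index := by
    have := Nat.card_le_card_of_injective F hF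
    rw [Nat.card_prod, Nat.card_prod, Nat.card_zmod] at this
    exact this
  calc c ^ (m + 1) = c ^ m * c := pow_succ _ _
    _ ≤ (P.index * L.index) * c := Nat.mul_le_mul_right _
      (pow_le_index_mul_index m c hc P L (Nat.card_pos (α := (Fin m → ℤ) ⧸ P)).ne'
        (Nat.card_pos (α := (Fin m → ℤ) ⧸ L)).ne' hPL)
    _ ≤ B.index := by rwa [mul_assoc]

/-- The vector `(0, a, 0)`. -/
def midVec {m : ℕ} (a : Fin m → ℤ) : Fin (m + 2) → ℤ :=
  Fin.cons 0 (Fin.snoc (α := fun _ => ℤ) a 0)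

lemma midVec_zero {m : ℕ} (a : Fin m → ℤ) : midVec a 0 = 0 := rfl

lemma midVec_last {m : ℕ} (a : Fin m → ℤ) : midVec a (Fin.last (m + 1)) = 0 := by
  rw [← Fin.succ_last, midVec, Fin.cons_succ, Fin.snoc_last]

lemma midVec_mid {m : ℕ} (a : Fin m → ℤ) (i : Fin m) : midVec a i.castSucc.succ = a i := by
  rw [midVec, Fin.cons_succ, Fin.snoc_castSucc]

lemma midVec_add {m : ℕ} (a b : Fin m → ℤ) : midVec (a + b) = midVec a + midVec b := by
  ext i
  refine Fin.cases (by simp [midVec_zero]) (fun i => ?_) i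
  refine Fin.lastCases ?_ (fun i => ?_) i
  · simp [midVec_last]
  · simp [midVec_mid]

open Matrix in
lemma midVec_dotProduct {m : ℕ} (a b : Fin m → ℤ) : midVec a ⬝ᵥ midVec b = a ⬝ᵥ b := by
  simp only [dotProduct]
  rw [Fin.sum_univ_succ, Fin.sum_univ_castSucc]
  simp [midVec_zero, midVec_last, midVec_mid]

/-- The matrix `1 + e₁ aᵀ + b e_kᵀ + s e₁ e_kᵀ` with `k = m + 2`, where `a` and `b` are placed in
the middle `m` coordinates. -/
def heisMat {m : ℕ} (a b : Fin m → ℤ) (s : ℤ) : Matrix (Fin (m + 2)) (Fin (m + 2)) ℤ :=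
  1 + Matrix.vecMulVec (Pi.single 0 1) (midVec a)
    + Matrix.vecMulVec (midVec b) (Pi.single (Fin.last _) 1)
    + s • Matrix.vecMulVec (Pi.single 0 1) (Pi.single (Fin.last _) 1)

lemma heisMat_det {m : ℕ} (a b : Fin m → ℤ) (s : ℤ) : (heisMat a b s).det = 1 := by
  have h0 : (0 : Fin (m + 2)) ≠ Fin.last (m + 1) := (Fin.last_pos).ne
  rw [Matrix.det_of_isUpperTriangular]
  · apply Finset.prod_eq_one
    intro i _
    simp only [heisMat, Matrix.add_apply, Matrix.one_apply_eq, Matrix.vecMulVec_apply,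
      Matrix.smul_apply, Pi.single_apply]
    by_cases h1 : i = 0
    · subst h1
      simp [midVec_zero, h0]
    · by_cases h2 : i = Fin.last (m + 1)
      · subst h2
        simp [midVec_last]
      · simp [h1, h2]
  · intro i j hij
    have hij : j < i := hij
    have h1 : i ≠ 0 := (Fin.zero_le j |>.trans_lt hij).ne'
    have h2 : j ≠ Fin.last (m + 1) := (hij.trans_le (Fin.le_last i)).ne
    simp only [heisMat, Matrix.add_apply, Matrix.smul_apply, Matrix.vecMulVec_apply]
    simp [h1, h2, Matrix.one_apply_ne hij.ne']

open Matrix in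
lemma heisMat_mul {m : ℕ} (a b : Fin m → ℤ) (s : ℤ) (a' b' : Fin m → ℤ) (s' : ℤ) :
    heisMat a b s * heisMat a' b' s' = heisMat (a + a') (b + b') (s + s' + a ⬝ᵥ b') := by
  have h0 : (0 : Fin (m + 2)) ≠ Fin.last (m + 1) := (Fin.last_pos).ne
  have h1 : midVec a ⬝ᵥ Pi.single 0 1 = 0 := by simp [midVec_zero]
  have h2 : Pi.single (Fin.last (m + 1)) (1 : ℤ) ⬝ᵥ midVec b' = 0 := by simp [midVec_last]
  have h3 : Pi.single (Fin.last (m + 1)) (1 : ℤ) ⬝ᵥ Pi.single 0 1 = 0 := by simp [h0]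
  have h4 := midVec_dotProduct a b'
  simp only [heisMat, midVec_add]
  generalize (Pi.single 0 1 : Fin (m + 2) → ℤ) = e at *
  generalize (Pi.single (Fin.last (m + 1)) 1 : Fin (m + 2) → ℤ) = f at *
  simp only [add_mul, mul_add, one_mul, mul_one, Matrix.smul_mul, Matrix.mul_smul,
    vecMulVec_mul_vecMulVec, h1, h2, h3, h4, vecMulVec_add, add_vecMulVec, vecMulVec_smul,
    zero_smul, vecMulVec_zero, smul_zero, add_smul]
  abel

/-- **Lower bound on the divisibility function of `SL_k(ℤ)`**: fix `k ≥ 3` and let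
`g_n = E_{1,k}(lcm(1,…,n)) ∈ SL_k(ℤ)` be the elementary matrix equal to the identity
except with entry `lcm(1,…,n)` in position `(1,k)`. Then every subgroup `B ≤ SL_k(ℤ)`
with `g_n ∉ B` has index at least `n^(k-1)` (a subgroup of infinite index, encoded by
`Subgroup.index B = 0`, certainly has index at least `n^(k-1)`). -/
theorem SL_divisibility_lower_bound
    (k : ℕ) (hk : 3 ≤ k) (n : ℕ) (hn : 1 ≤ n)
    (gn : Matrix.SpecialLinearGroup (Fin k) ℤ)
    (hgn : (gn : Matrix (Fin k) (Fin k) ℤ) =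
      Matrix.transvection ⟨0, by omega⟩ ⟨k - 1, by omega⟩
        ((((Finset.Icc 1 n).lcm id : ℕ)) : ℤ))
    (B : Subgroup (Matrix.SpecialLinearGroup (Fin k) ℤ)) (hB : gn ∉ B) :
    B.index = 0 ∨ n ^ (k - 1) ≤ B.index := by
  obtain ⟨m, rfl⟩ : ∃ m, k = m + 2 := ⟨k - 2, by omega⟩
  refine or_iff_not_imp_left.2 fun hidx => ?_
  let H (a b : Fin m → ℤ) (s : ℤ) : Matrix.SpecialLinearGroup (Fin (m + 2)) ℤ :=
    ⟨heisMat a b s, heisMat_det a b s⟩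
  have hmul : ∀ a b s a' b' s',
      H a b s * H a' b' s' = H (a + a') (b + b') (s + s' + a ⬝ᵥ b') := by
    intro a b s a' b' s'
    apply Subtype.ext
    exact heisMat_mul a b s a' b' s'
  have hz : ∀ s t, H 0 0 s * H 0 0 t = H 0 0 (s + t) := by
    intro s t
    rw [hmul]
    simp
  let ζ : Multiplicative ℤ →* Matrix.SpecialLinearGroup (Fin (m + 2)) ℤ :=
    MonoidHom.mk' (fun s => H 0 0 s.toAdd) (fun s t => (hz _ _).symm)
  obtain ⟨d, hd⟩ := Int.subgroup_cyclic (Subgroup.toAddSubgroup' (B.comap ζ))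
  have hdB : ∀ s, H 0 0 s ∈ B ↔ ((d.natAbs : ℕ) : ℤ) ∣ s := by
    intro s
    rw [Int.natAbs_dvd, ← Int.mem_zmultiples_iff, AddSubgroup.zmultiples_eq_closure, ← hd]
    rfl
  have hd0 : d.natAbs ≠ 0 := by
    obtain ⟨N, hN, -, hmem⟩ := Subgroup.exists_pow_mem_of_index_ne_zero hidx (H 0 0 1)
    have hpow : ζ (Multiplicative.ofAdd 1) ^ N = H 0 0 N := by
      rw [← map_pow, ← ofAdd_nsmul]
      simp [ζ]
    have h1 : H 0 0 (N : ℤ) ∈ B := hpow ▸ hmem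
    intro h0
    rw [hdB, h0] at h1
    simp at h1
    omega
  have hbound := heisenberg_index_le m H hmul B hidx d.natAbs hd0 hdB
  have hgnH : gn = H 0 0 (((Finset.Icc 1 n).lcm id : ℕ) : ℤ) := by
    apply Subtype.ext
    rw [hgn]
    have hm : midVec (0 : Fin m → ℤ) = 0 := by
      have := midVec_add (0 : Fin m → ℤ) 0
      simpa using this
    simp only [H, heisMat, hm, Matrix.vecMulVec_zero, Matrix.zero_vecMulVec, add_zero,
      ← Matrix.single_eq_single_vecMulVec_single, Matrix.smul_single, smul_eq_mul, mul_one]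
    rfl
  have hlt : n < d.natAbs := by
    by_contra! hle
    apply hB
    rw [hgnH, hdB]
    exact Int.natCast_dvd_natCast.2
      (Finset.dvd_lcm (f := id) (Finset.mem_Icc.2 ⟨Nat.pos_of_ne_zero hd0, hle⟩))
  exact (Nat.pow_le_pow_left hlt.le (m + 1)).trans hbound
end

section
/- Let p be a prime and k > 2. Then for every g ∈ SL_k(ℤ/pℤ) not lying in the center Z(SL_k(ℤ/pℤ)), there exists a subgroup B ≤ SL_k(ℤ/pℤ) with g ∉ B and [SL_k(ℤ/pℤ) : B] ≤ 2·p^{k-1}. (One may take B to be a suitable conjugate of the subgroup Δ of matrices whose last row is (0,…,0,*), whose index in SL_k(ℤ/pℤ) is (p^k − 1)/(p − 1) ≤ 2·p^{k-1}.) -/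
/-!
`SL_k(𝔽_p)` acts on the projective space `ℙ(𝔽_p^k)`, and the kernel of this action is the center.
Hence a noncentral `g` moves some line `x`, so `g` is not in the stabilizer `B` of `x` (a conjugate
of the stabilizer of a coordinate line). The index of `B` is the size of the orbit of `x`, which is
at most `#ℙ(𝔽_p^k) = (1 + p + ⋯ + p^(k-2)) + p^(k-1) ≤ 2 p^(k-1)`.
-/

/-- Let `p` be a prime and `k > 2`. Then every `g ∈ SL_k(ℤ/pℤ)` not lying in the center
lies outside some subgroup `B ≤ SL_k(ℤ/pℤ)` of index at most `2·p^(k-1)`. -/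
theorem SL_mod_p_noncentral_avoided_by_small_index_subgroup
    (p : ℕ) (hp : p.Prime) (k : ℕ) (hk : 2 < k)
    (g : Matrix.SpecialLinearGroup (Fin k) (ZMod p))
    (hg : g ∉ Subgroup.center (Matrix.SpecialLinearGroup (Fin k) (ZMod p))) :
    ∃ B : Subgroup (Matrix.SpecialLinearGroup (Fin k) (ZMod p)),
      g ∉ B ∧ B.index ≠ 0 ∧ B.index ≤ 2 * p ^ (k - 1) := by
  have : Fact p.Prime := ⟨hp⟩
  obtain ⟨x, hx⟩ : ∃ x : Projectivization (ZMod p) (Fin k → ZMod p), g • x ≠ x := by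
    by_contra! h
    refine hg ?_
    rw [← Projectivization.SL_mulAction_ker, MonoidHom.mem_ker]
    exact Equiv.ext h
  refine ⟨MulAction.stabilizer _ x, hx, ?_, ?_⟩
  · exact Subgroup.index_ne_zero_of_finite
  · rw [MulAction.index_stabilizer]
    refine (Set.ncard_le_card _).trans ?_
    rw [Projectivization.card_of_finrank (n := k) _ _ (by simp), Nat.card_zmod]
    obtain ⟨m, rfl⟩ : ∃ m, k = m + 1 := ⟨k - 1, by omega⟩
    have h : ∑ i ∈ Finset.range m, p ^ i < p ^ m :=
      Nat.geomSum_lt hp.two_le fun i hi => Finset.mem_range.mp hi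
    rw [Finset.sum_range_succ, Nat.add_sub_cancel]
    omega
end
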